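/- Let X₀ = {V ∈ X : E(q,V) = 0 for all q ∈ H̃^{1/2}(Γ)}. Then X₀, with the norm of X, is compactly embedded in H; that is, every bounded sequence in X₀ has a subsequence converging in H. -/

import Mathlib

noncomputable section

open MeasureTheory Complex Filter Topology
open scoped Real NNReal ContDiff

/-- The plane `ℝ²`. -/
abbrev R2 : Type := EuclideanSpace ℝ (Fin 2)

/-- Euclidean dot product on `ℝ²`. -/
def rdot (x ξ : R2) : ℝ := x 0 * ξ 0 + x 1 * ξ 1

/-- `testFT φ ξ = ∫ e^{i x·ξ} φ(x) dx`, the (inverse-type) Fourier integral of a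
test function `φ`. -/
def testFT (φ : R2 → ℂ) (ξ : R2) : ℂ :=
  ∫ x : R2, Complex.exp (Complex.I * (rdot x ξ : ℂ)) * φ x

/-- The squared `H^s(ℝ²)` norm of the distribution whose Fourier transform is `F`:
`‖f‖² = (2π)⁻² ∫ (1+|ξ|²)^s |f̂(ξ)|² dξ`. -/
def wnormSq (s : ℝ) (F : R2 → ℂ) : ℝ :=
  ((2 * π) ^ 2)⁻¹ * ∫ ξ : R2, ((1 : ℝ) + ‖ξ‖ ^ 2) ^ s * ‖F ξ‖ ^ 2

/-- The `H^s(ℝ²)` norm (Fourier-side representation). -/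
def wnorm (s : ℝ) (F : R2 → ℂ) : ℝ := Real.sqrt (wnormSq s F)

/-- `F` is the Fourier transform of an element of `H^s(ℝ²)`. -/
def MemHs (s : ℝ) (F : R2 → ℂ) : Prop :=
  AEStronglyMeasurable F (volume : Measure R2) ∧
    Integrable (fun ξ : R2 => ((1 : ℝ) + ‖ξ‖ ^ 2) ^ s * ‖F ξ‖ ^ 2) volume

/-- An element `f` of `H̃^s(Γ)`: a distribution on `ℝ²` of Sobolev regularity `s`
supported in the closure of `Γ`, represented by its Fourier transform `ft`
(a continuous function, `f` being a compactly supported distribution).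
The support condition is expressed by testing against smooth compactly supported
functions `φ` whose support avoids `closure Γ`, via the Parseval pairing
`∫ f φ dx = (2π)⁻² ∫ f̂(ξ) φ̌(ξ) dξ` with `φ̌(ξ) = ∫ e^{ix·ξ} φ(x) dx`. -/
structure HTildeElt (s : ℝ) (Γ : Set R2) where
  ft : R2 → ℂ
  cont : Continuous ft
  mem : Integrable (fun ξ : R2 => ((1 : ℝ) + ‖ξ‖ ^ 2) ^ s * ‖ft ξ‖ ^ 2) volume
  supp : ∀ φ : R2 → ℂ, ContDiff ℝ ∞ φ → HasCompactSupport φ →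
    tsupport φ ∩ closure Γ = ∅ → (∫ ξ : R2, ft ξ * testFT φ ξ) = 0

/-- `Γ` is a bounded Lipschitz domain in `ℝ²`: a nonempty bounded open set whose
boundary is locally, after a rigid motion, the graph of a Lipschitz function with
the domain on one side. -/
def IsLipschitzDomain (Γ : Set R2) : Prop :=
  IsOpen Γ ∧ Bornology.IsBounded Γ ∧ Γ.Nonempty ∧
    ∀ x ∈ frontier Γ, ∃ (e : R2 ≃ₗᵢ[ℝ] R2) (L : ℝ≥0) (f : ℝ → ℝ) (U : Set R2),
      LipschitzWith L f ∧ IsOpen U ∧ x ∈ U ∧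
        ∀ y ∈ U, (y ∈ Γ ↔ f (e y 0) < e y 1)

/-- `ξ·V̂(ξ)`, i.e. `-i` times the Fourier transform of `div V`. -/
def dotFt (F1 F2 : R2 → ℂ) (ξ : R2) : ℂ := (ξ 0 : ℂ) * F1 ξ + (ξ 1 : ℂ) * F2 ξ

/-- `ξ⊥·V̂(ξ)`, i.e. `-i` times the Fourier transform of `curl V`. -/
def curlFt (F1 F2 : R2 → ℂ) (ξ : R2) : ℂ := (ξ 1 : ℂ) * F1 ξ - (ξ 0 : ℂ) * F2 ξ

/-- An element of `X = H̃^{-1/2}_div(Γ)`: a pair of elements of `H̃^{-1/2}(Γ)`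
whose distributional divergence also belongs to `H̃^{-1/2}(Γ)`. -/
structure Xelt (Γ : Set R2) where
  c1 : HTildeElt (-(1/2) : ℝ) Γ
  c2 : HTildeElt (-(1/2) : ℝ) Γ
  divMem : Integrable (fun ξ : R2 =>
    ((1 : ℝ) + ‖ξ‖ ^ 2) ^ (-(1/2) : ℝ) * ‖dotFt c1.ft c2.ft ξ‖ ^ 2) volume

/-- The Fourier transform of `div V`. -/
def divFt {Γ : Set R2} (V : Xelt Γ) (ξ : R2) : ℂ :=
  Complex.I * dotFt V.c1.ft V.c2.ft ξ

/-- The squared `H`-norm `‖V‖²_H` of a vector field. -/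
def HnormSq {Γ : Set R2} (V : Xelt Γ) : ℝ :=
  wnormSq (-(1/2)) V.c1.ft + wnormSq (-(1/2)) V.c2.ft

/-- The squared `X`-norm `‖V‖²_X = ‖V‖²_H + ‖div V‖²_{H̃^{-1/2}}`. -/
def XnormSq {Γ : Set R2} (V : Xelt Γ) : ℝ :=
  HnormSq V + wnormSq (-(1/2)) (divFt V)

/-- The `X`-norm. -/
def Xnorm {Γ : Set R2} (V : Xelt Γ) : ℝ := Real.sqrt (XnormSq V)

/-- `ĝ₀(ξ) = i/√(k²-|ξ|²)`, with the branch `√(k²-|ξ|²) = i√(|ξ|²-k²)` for `|ξ| > k`. -/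
def g0hat (k : ℝ) (ξ : R2) : ℂ :=
  if ‖ξ‖ < k then Complex.I / ((Real.sqrt (k ^ 2 - ‖ξ‖ ^ 2) : ℝ) : ℂ)
  else 1 / ((Real.sqrt (‖ξ‖ ^ 2 - k ^ 2) : ℝ) : ℂ)

/-- The integrand of the sesquilinear form `B`:
`ĝ₀(ξ) [ (|ξ|²-k²) a₁ b̄₁ - k² a₂ b̄₂ ]` with `a₁ = ξ·Ŵ/|ξ|`, `a₂ = ξ⊥·Ŵ/|ξ|`, etc. -/
def Bintegrand (k : ℝ) (F1 F2 G1 G2 : R2 → ℂ) (ξ : R2) : ℂ :=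
  g0hat k ξ *
    (((‖ξ‖ ^ 2 - k ^ 2 : ℝ) : ℂ) * (dotFt F1 F2 ξ * starRingEnd ℂ (dotFt G1 G2 ξ)) -
      ((k ^ 2 : ℝ) : ℂ) * (curlFt F1 F2 ξ * starRingEnd ℂ (curlFt G1 G2 ξ))) /
    ((‖ξ‖ ^ 2 : ℝ) : ℂ)

/-- The sesquilinear form `B(W,V)`. -/
def Bform (k : ℝ) {Γ : Set R2} (W V : Xelt Γ) : ℂ :=
  ∫ ξ : R2, Bintegrand k W.c1.ft W.c2.ft V.c1.ft V.c2.ft ξ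

/-- The sesquilinear form `E(q,V) = B(curl⃗ q, V)`, where
`curl⃗ q = (∂q/∂x₂, -∂q/∂x₁)` has Fourier transform `(iξ₂ q̂, -iξ₁ q̂)`. -/
def Eform (k : ℝ) {Γ : Set R2} (q : HTildeElt (1/2 : ℝ) Γ) (V : Xelt Γ) : ℂ :=
  ∫ ξ : R2, Bintegrand k (fun η => Complex.I * (η 1 : ℂ) * q.ft η)
      (fun η => -(Complex.I * (η 0 : ℂ) * q.ft η)) V.c1.ft V.c2.ft ξ

/-- The inner product of the Hilbert space `X`; by the Riesz representation
theorem, every bounded conjugate-linear functional on `X` is `V ↦ Xinner Y V`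
for a unique `Y ∈ X`, with functional norm `Xnorm Y`. -/
def Xinner {Γ : Set R2} (Y V : Xelt Γ) : ℂ :=
  ((((2 * π) ^ 2)⁻¹ : ℝ) : ℂ) * ∫ ξ : R2, ((((1 : ℝ) + ‖ξ‖ ^ 2) ^ (-(1/2) : ℝ) : ℝ) : ℂ) *
    (Y.c1.ft ξ * starRingEnd ℂ (V.c1.ft ξ) + Y.c2.ft ξ * starRingEnd ℂ (V.c2.ft ξ) +
      divFt Y ξ * starRingEnd ℂ (divFt V ξ))

/-- `√(k²-|ξ|²)`, with the branch `i√(|ξ|²-k²)` for `|ξ| > k`. -/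
def rootk (k : ℝ) (ξ : R2) : ℂ :=
  if ‖ξ‖ < k then ((Real.sqrt (k ^ 2 - ‖ξ‖ ^ 2) : ℝ) : ℂ)
  else Complex.I * ((Real.sqrt (‖ξ‖ ^ 2 - k ^ 2) : ℝ) : ℂ)

/-- The Fourier multiplier `i/(2√(k²-|ξ|²))` of the Helmholtz single-layer
operator `T` with kernel `e^{ik|x-y|}/(4π|x-y|)`. -/
def mT (k : ℝ) (ξ : R2) : ℂ := Complex.I / (2 * rootk k ξ)

/-- The Fourier multiplier `1/(2|ξ|)` of the Laplace single-layer operator `T₀`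
with kernel `1/(4π|x-y|)`. -/
def mT0 (ξ : R2) : ℂ := 1 / (2 * ((‖ξ‖ : ℝ) : ℂ))

/-- The Fourier multiplier of `R = T - T₀`. -/
def mR (k : ℝ) (ξ : R2) : ℂ := mT k ξ - mT0 ξ

/-- The distributions with Fourier data `G` and `E` have the same restriction to
the open set `Γ`: `⟨G - E, φ⟩ = 0` for all smooth `φ` compactly supported in `Γ`
(pairing written on the Fourier side). -/
def AgreeOn (Γ : Set R2) (G E : R2 → ℂ) : Prop :=
  ∀ φ : R2 → ℂ, ContDiff ℝ ∞ φ → HasCompactSupport φ → tsupport φ ⊆ Γ →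
    (∫ ξ : R2, (G ξ - E ξ) * testFT φ ξ) = 0

/-- The duality pairing `⟨f, ψ⟩` between `H^{1/2}(Γ)` and `H̃^{-1/2}(Γ)`, written
on the Fourier side (Plancherel): `(2π)⁻² ∫ f̂(ξ) conj(ψ̂(ξ)) dξ`, where `G = f̂`
is the Fourier data of (an extension of) `f`. -/
def dualPair (G ψ : R2 → ℂ) : ℂ :=
  ((((2 * π) ^ 2)⁻¹ : ℝ) : ℂ) * ∫ ξ : R2, G ξ * starRingEnd ℂ (ψ ξ)

/-!
A field `V` with `div V` in `H̃^{-1/2}` is, near each boundary point, swept along a cone of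
directions that stays in `closure Γ`; averaging the Poincaré line integrals over these directions
gives `q ∈ H̃^{1/2}(Γ)` such that `curl (V - curl⃗ q)` lies in `H^{-1/2}` rather than `H^{-3/2}`.
Testing `E(q, V) = 0` with this `q` replaces `∫ ĝ₀ |ξ|⁻² |ξ⊥·V̂|²`, which for large `|ξ|` controls
the part of `‖V‖²_H` not controlled by the divergence, by an integral against the curl of
`V - curl⃗ q`. Thus frequencies `|ξ| ≥ R` contribute `O(R⁻¹ ‖V‖²_X)` to `‖V‖²_H`, while on
`|ξ| ≤ R` a subsequence of Fourier transforms converges uniformly by Arzelà–Ascoli, the Fourier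
transforms of a bounded subset of `H̃^{-1/2}(Γ)` being equicontinuous.
-/

section Weight

variable {E : Type*} [NormedAddCommGroup E]

/-- The weight `(1 + |ξ|²)^s` in the Fourier-side `H^s` norm. -/
def sobolevWeight (s : ℝ) (ξ : E) : ℝ := (1 + ‖ξ‖ ^ 2) ^ s

lemma one_le_one_add_norm_sq (ξ : E) : 1 ≤ 1 + ‖ξ‖ ^ 2 := by
  linarith [sq_nonneg ‖ξ‖]

lemma sobolevWeight_pos (s : ℝ) (ξ : E) : 0 < sobolevWeight s ξ := by
  unfold sobolevWeight; positivity

lemma continuous_sobolevWeight (s : ℝ) : Continuous (sobolevWeight s : E → ℝ) :=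
  Continuous.rpow_const (by fun_prop) fun ξ => Or.inl (by positivity)

lemma sobolevWeight_add (s t : ℝ) (ξ : E) :
    sobolevWeight (s + t) ξ = sobolevWeight s ξ * sobolevWeight t ξ :=
  Real.rpow_add (by positivity) s t

lemma sobolevWeight_neg_mul_cancel (s : ℝ) (ξ : E) :
    sobolevWeight (-s) ξ * sobolevWeight s ξ = 1 := by
  rw [← sobolevWeight_add, neg_add_cancel, sobolevWeight, Real.rpow_zero]

lemma sobolevWeight_neg (s : ℝ) (ξ : E) : sobolevWeight s (-ξ) = sobolevWeight s ξ := by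
  simp only [sobolevWeight, norm_neg]

lemma sobolevWeight_le_one {s : ℝ} (hs : s ≤ 0) (ξ : E) : sobolevWeight s ξ ≤ 1 :=
  Real.rpow_le_one_of_one_le_of_nonpos (one_le_one_add_norm_sq ξ) hs

lemma sobolevWeight_half_sq (ξ : E) : sobolevWeight (1 / 2) ξ ^ 2 = 1 + ‖ξ‖ ^ 2 := by
  rw [sq, ← sobolevWeight_add, sobolevWeight]
  norm_num

lemma norm_le_sobolevWeight_half (ξ : E) : ‖ξ‖ ≤ sobolevWeight (1 / 2) ξ :=
  abs_le_of_sq_le_sq' (by linarith [sobolevWeight_half_sq ξ]) (sobolevWeight_pos _ ξ).le |>.2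

lemma one_add_norm_sq_le_mul (ξ η : E) :
    1 + ‖ξ‖ ^ 2 ≤ 2 * (1 + ‖ξ - η‖ ^ 2) * (1 + ‖η‖ ^ 2) := by
  have triangle : ‖ξ‖ ≤ ‖ξ - η‖ + ‖η‖ := by simpa using norm_add_le (ξ - η) η
  nlinarith [sq_nonneg (‖ξ - η‖ - ‖η‖), norm_nonneg ξ, sq_nonneg (‖ξ - η‖ * ‖η‖)]

lemma sobolevWeight_peetre (s : ℝ) (ξ η : E) :
    sobolevWeight s ξ ≤ 2 ^ |s| * sobolevWeight |s| (ξ - η) * sobolevWeight s η := by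
  have of_nonneg : ∀ (t : ℝ) (x y : E), 0 ≤ t →
      sobolevWeight t x ≤ 2 ^ t * sobolevWeight t (x - y) * sobolevWeight t y := by
    intro t x y ht
    simp only [sobolevWeight]
    rw [← Real.mul_rpow (by positivity) (by positivity),
      ← Real.mul_rpow (by positivity) (by positivity)]
    exact Real.rpow_le_rpow (by positivity) (one_add_norm_sq_le_mul x y) ht
  rcases le_total 0 s with hs | hs
  · rw [abs_of_nonneg hs]
    exact of_nonneg s ξ η hs
  · rw [abs_of_nonpos hs]
    have swapped := of_nonneg (-s) η ξ (neg_nonneg.2 hs)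
    rw [← neg_sub ξ η, sobolevWeight_neg] at swapped
    calc sobolevWeight s ξ
        = sobolevWeight (-s) η * (sobolevWeight s ξ * sobolevWeight s η) := by
          linear_combination -sobolevWeight s ξ * sobolevWeight_neg_mul_cancel s η
      _ ≤ 2 ^ (-s) * sobolevWeight (-s) (ξ - η) * sobolevWeight (-s) ξ *
            (sobolevWeight s ξ * sobolevWeight s η) :=
          mul_le_mul_of_nonneg_right swapped
            (mul_nonneg (sobolevWeight_pos s ξ).le (sobolevWeight_pos s η).le)
      _ = 2 ^ (-s) * sobolevWeight (-s) (ξ - η) * sobolevWeight s η := by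
          linear_combination (2 ^ (-s) * sobolevWeight (-s) (ξ - η) * sobolevWeight s η) *
            sobolevWeight_neg_mul_cancel s ξ

lemma integrable_sobolevWeight [NormedSpace ℝ E] [FiniteDimensional ℝ E] [MeasurableSpace E]
    [BorelSpace E] (μ : Measure E) [μ.IsAddHaarMeasure] {s : ℝ}
    (hs : s < -(Module.finrank ℝ E : ℝ) / 2) : Integrable (sobolevWeight s) μ := by
  have := integrable_rpow_neg_one_add_norm_sq (E := E) (μ := μ) (r := -2 * s) (by linarith)
  rwa [show -(-2 * s) / 2 = s by ring] at this

end Weight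

lemma sq_integral_le_mul_of_sq_le {α : Type*} [MeasurableSpace α] {μ : Measure α} {a b c : α → ℝ}
    (ha : Integrable a μ) (hc : Integrable c μ) (ha0 : ∀ x, 0 ≤ a x) (hc0 : ∀ x, 0 ≤ c x)
    (hbac : ∀ x, b x ^ 2 ≤ a x * c x) : (∫ x, b x ∂μ) ^ 2 ≤ (∫ x, a x ∂μ) * ∫ x, c x ∂μ := by
  by_cases hb : Integrable b μ
  · have discrim_nonpos := discrim_le_zero (a := ∫ x, a x ∂μ) (b := 2 * ∫ x, b x ∂μ)
      (c := ∫ x, c x ∂μ) fun t => by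
        have expand : ∫ x, (a x * (t * t) + 2 * b x * t + c x) ∂μ =
            (∫ x, a x ∂μ) * (t * t) + 2 * (∫ x, b x ∂μ) * t + ∫ x, c x ∂μ := by
          have hb' : Integrable (fun x => 2 * b x * t) μ := (hb.const_mul 2).mul_const t
          have ha' : Integrable (fun x => a x * (t * t)) μ := ha.mul_const _
          rw [integral_add (by exact ha'.add hb') hc, integral_add ha' hb', integral_mul_const,
            integral_mul_const, integral_const_mul]
        rw [← expand]
        refine integral_nonneg fun x => ?_
        rcases (ha0 x).eq_or_lt with h | h
        · have : b x = 0 := by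
            have := hbac x
            rw [← h, zero_mul] at this
            exact pow_eq_zero_iff two_ne_zero |>.1 (le_antisymm this (sq_nonneg _))
          simpa [← h, this] using hc0 x
        · have : 0 ≤ a x * (a x * (t * t) + 2 * b x * t + c x) := by
            nlinarith [sq_nonneg (a x * t + b x), hbac x]
          exact nonneg_of_mul_nonneg_right this h
    simp only [discrim] at discrim_nonpos
    linarith
  · rw [integral_undef hb, zero_pow two_ne_zero]
    exact mul_nonneg (integral_nonneg ha0) (integral_nonneg hc0)

section RapidDecay

variable {E : Type*} [NormedAddCommGroup E]

/-- Continuous functions decaying faster than any power of `1 + |ξ|²`. Convolution with such a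
kernel acts on weighted `L²` spaces; Fourier transforms of test functions are of this kind. -/
structure RapidDecay (G : E → ℂ) : Prop where
  continuous : Continuous G
  decay : ∀ s : ℝ, ∃ C : ℝ, ∀ ξ, ‖G ξ‖ ≤ C * sobolevWeight s ξ

namespace RapidDecay

variable {G : E → ℂ}

lemma comp_neg (hG : RapidDecay G) : RapidDecay fun ξ => G (-ξ) where
  continuous := hG.continuous.comp continuous_neg
  decay s := by
    obtain ⟨C, hC⟩ := hG.decay s
    exact ⟨C, fun ξ => sobolevWeight_neg s ξ ▸ hC (-ξ)⟩

lemma mul_of_norm_le {m : E → ℂ} {A t : ℝ} (hG : RapidDecay G) (hm : Continuous m)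
    (hA : ∀ ξ, ‖m ξ‖ ≤ A * sobolevWeight t ξ) : RapidDecay fun ξ => m ξ * G ξ where
  continuous := hm.mul hG.continuous
  decay s := by
    obtain ⟨C, hC⟩ := hG.decay (s - t)
    refine ⟨A * C, fun ξ => ?_⟩
    calc ‖m ξ * G ξ‖ = ‖m ξ‖ * ‖G ξ‖ := norm_mul _ _
      _ ≤ A * sobolevWeight t ξ * (C * sobolevWeight (s - t) ξ) :=
          mul_le_mul (hA ξ) (hC ξ) (norm_nonneg _) ((norm_nonneg _).trans (hA ξ))
      _ = A * C * sobolevWeight (t + (s - t)) ξ := by rw [sobolevWeight_add]; ring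
      _ = A * C * sobolevWeight s ξ := by rw [add_sub_cancel]

lemma mul {H : E → ℂ} (hH : RapidDecay H) (hG : RapidDecay G) : RapidDecay fun ξ => H ξ * G ξ :=
  have ⟨_, hC⟩ := hH.decay 0
  hG.mul_of_norm_le hH.continuous hC

lemma const_mul (c : ℂ) (hG : RapidDecay G) : RapidDecay fun ξ => c * G ξ :=
  hG.mul_of_norm_le (A := ‖c‖) (t := 0) continuous_const fun ξ => by
    rw [sobolevWeight, Real.rpow_zero, mul_one]

lemma norm_sub_comp_sub_le (hG : RapidDecay G) (s : ℝ) : ∃ C : ℝ, ∀ ξ ξ₀ η,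
    ‖G (ξ - η) - G (ξ₀ - η)‖ ≤
      C * (1 + sobolevWeight |s| (ξ - ξ₀)) * sobolevWeight s (ξ₀ - η) := by
  obtain ⟨C, hC⟩ := hG.decay s
  have C_nonneg : 0 ≤ C :=
    nonneg_of_mul_nonneg_left ((norm_nonneg _).trans (hC 0)) (sobolevWeight_pos s 0)
  refine ⟨2 ^ |s| * C, fun ξ ξ₀ η => (norm_sub_le _ _).trans ?_⟩
  have peetre := sobolevWeight_peetre s (ξ - η) (ξ₀ - η)
  rw [sub_sub_sub_cancel_right] at peetre
  have one_le : (1 : ℝ) ≤ 2 ^ |s| := Real.one_le_rpow one_le_two (abs_nonneg s)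
  calc ‖G (ξ - η)‖ + ‖G (ξ₀ - η)‖
      ≤ C * sobolevWeight s (ξ - η) + C * (1 * sobolevWeight s (ξ₀ - η)) := by
        rw [one_mul]; exact add_le_add (hC _) (hC _)
    _ ≤ C * (2 ^ |s| * sobolevWeight |s| (ξ - ξ₀) * sobolevWeight s (ξ₀ - η)) +
          C * (2 ^ |s| * sobolevWeight s (ξ₀ - η)) :=
        add_le_add (mul_le_mul_of_nonneg_left peetre C_nonneg) (mul_le_mul_of_nonneg_left
          (mul_le_mul_of_nonneg_right one_le (sobolevWeight_pos s _).le) C_nonneg)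
    _ = _ := by ring

lemma exists_sobolevWeight_mul_norm_sub_sq_le (hG : RapidDecay G) (s d : ℝ) (ξ₀ : E) :
    ∃ A, ∀ᶠ ξ in 𝓝 ξ₀, ∀ η,
      sobolevWeight s η * ‖G (ξ - η) - G (ξ₀ - η)‖ ^ 2 ≤ A * sobolevWeight d (ξ₀ - η) := by
  set r : ℝ := (d - |s|) / 2 with hr
  obtain ⟨C, hC⟩ := hG.norm_sub_comp_sub_le r
  have near : ∀ᶠ ξ in 𝓝 ξ₀, sobolevWeight |r| (ξ - ξ₀) < 2 := by
    have := (continuous_sobolevWeight |r|).comp (continuous_sub_right ξ₀)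
    refine this.continuousAt.eventually_lt continuousAt_const ?_
    simp [sobolevWeight]
  refine ⟨(|C| * 3) ^ 2 * (2 ^ |s| * sobolevWeight s ξ₀), ?_⟩
  filter_upwards [near] with ξ hξ η
  have difference : ‖G (ξ - η) - G (ξ₀ - η)‖ ≤ |C| * 3 * sobolevWeight r (ξ₀ - η) := by
    have := (sobolevWeight_pos |r| (ξ - ξ₀)).le
    have := (sobolevWeight_pos r (ξ₀ - η)).le
    refine (hC ξ ξ₀ η).trans ?_
    gcongr
    · exact le_abs_self C
    · linarith
  have peetre := sobolevWeight_peetre s η ξ₀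
  rw [← neg_sub ξ₀ η, sobolevWeight_neg] at peetre
  calc sobolevWeight s η * ‖G (ξ - η) - G (ξ₀ - η)‖ ^ 2
      ≤ 2 ^ |s| * sobolevWeight |s| (ξ₀ - η) * sobolevWeight s ξ₀ *
          (|C| * 3 * sobolevWeight r (ξ₀ - η)) ^ 2 :=
        mul_le_mul peetre (pow_le_pow_left₀ (norm_nonneg _) difference 2) (sq_nonneg _)
          ((sobolevWeight_pos s η).le.trans peetre)
    _ = (|C| * 3) ^ 2 * (2 ^ |s| * sobolevWeight s ξ₀) *
          sobolevWeight (|s| + (r + r)) (ξ₀ - η) := by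
        rw [sobolevWeight_add, sobolevWeight_add]; ring
    _ = _ := by rw [show |s| + (r + r) = d by rw [hr]; ring]

variable [NormedSpace ℝ E] [FiniteDimensional ℝ E] [MeasurableSpace E] [BorelSpace E]
  (μ : Measure E) [μ.IsAddHaarMeasure]

lemma integrable_sobolevWeight_mul_norm (hG : RapidDecay G) (s : ℝ) :
    Integrable (fun ξ => sobolevWeight s ξ * ‖G ξ‖) μ := by
  set d : ℝ := -(Module.finrank ℝ E : ℝ) / 2 - 1 with hd
  obtain ⟨C, hC⟩ := hG.decay (d - s)
  refine ((integrable_sobolevWeight μ (s := d) (by linarith)).const_mul C).mono'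
    ((continuous_sobolevWeight s).mul hG.continuous.norm).aestronglyMeasurable
    (.of_forall fun ξ => ?_)
  rw [Real.norm_of_nonneg (mul_nonneg (sobolevWeight_pos s ξ).le (norm_nonneg _))]
  calc sobolevWeight s ξ * ‖G ξ‖ ≤ sobolevWeight s ξ * (C * sobolevWeight (d - s) ξ) :=
        mul_le_mul_of_nonneg_left (hC ξ) (sobolevWeight_pos s ξ).le
    _ = C * sobolevWeight (s + (d - s)) ξ := by rw [sobolevWeight_add]; ring
    _ = C * sobolevWeight d ξ := by rw [add_sub_cancel]

lemma integrable_sobolevWeight_mul_norm_sq (hG : RapidDecay G) (s : ℝ) :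
    Integrable (fun ξ => sobolevWeight s ξ * ‖G ξ‖ ^ 2) μ := by
  simpa only [norm_mul, sq] using (hG.mul hG).integrable_sobolevWeight_mul_norm μ s

lemma integrable (hG : RapidDecay G) : Integrable G μ := by
  rw [← integrable_norm_iff hG.continuous.aestronglyMeasurable]
  simpa only [sobolevWeight, Real.rpow_zero, one_mul] using
    hG.integrable_sobolevWeight_mul_norm μ 0

end RapidDecay

end RapidDecay

section SobolevEnergy

variable {E : Type*} [NormedAddCommGroup E]

lemma sobolevWeight_mul_sq_nonneg (s : ℝ) (F : E → ℂ) (ξ : E) :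
    0 ≤ sobolevWeight s ξ * ‖F ξ‖ ^ 2 :=
  mul_nonneg (sobolevWeight_pos s ξ).le (sq_nonneg _)

variable [MeasureSpace E]

/-- The weighted integral `∫ (1 + |ξ|²)^s |F(ξ)|² dξ`: up to the factor `(2π)^{-2}`, the squared
`H^s` norm of the distribution with Fourier transform `F`. -/
def sobolevEnergy (s : ℝ) (F : E → ℂ) : ℝ := ∫ ξ, sobolevWeight s ξ * ‖F ξ‖ ^ 2

/-- `F` is a continuous function which is the Fourier transform of an element of `H^s`. -/
structure IsSobolevFT (s : ℝ) (F : E → ℂ) : Prop where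
  continuous : Continuous F
  integrable : Integrable fun ξ => sobolevWeight s ξ * ‖F ξ‖ ^ 2

lemma sobolevEnergy_nonneg (s : ℝ) (F : E → ℂ) : 0 ≤ sobolevEnergy s F :=
  integral_nonneg (sobolevWeight_mul_sq_nonneg s F)

lemma sobolevEnergy_const_mul (s : ℝ) (c : ℂ) (F : E → ℂ) :
    sobolevEnergy s (fun ξ => c * F ξ) = ‖c‖ ^ 2 * sobolevEnergy s F := by
  rw [sobolevEnergy, sobolevEnergy, ← integral_const_mul]
  congr 1 with ξ
  rw [norm_mul]
  ring

lemma norm_add_sq_le_two_mul {V : Type*} [SeminormedAddCommGroup V] (x y : V) :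
    ‖x + y‖ ^ 2 ≤ 2 * (‖x‖ ^ 2 + ‖y‖ ^ 2) :=
  (pow_le_pow_left₀ (norm_nonneg _) (norm_add_le x y) 2).trans (add_sq_le)

lemma norm_sum_sq_le_card_mul {ι V : Type*} [SeminormedAddCommGroup V] (t : Finset ι)
    (f : ι → V) : ‖∑ i ∈ t, f i‖ ^ 2 ≤ t.card * ∑ i ∈ t, ‖f i‖ ^ 2 :=
  (pow_le_pow_left₀ (norm_nonneg _) (norm_sum_le t f) 2).trans sq_sum_le_card_mul_sum_sq

variable [OpensMeasurableSpace E] {s : ℝ} {F G : E → ℂ}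

lemma IsSobolevFT.of_le {g : E → ℝ} (hF : Continuous F) (hg : Integrable g)
    (hle : ∀ ξ, sobolevWeight s ξ * ‖F ξ‖ ^ 2 ≤ g ξ) :
    IsSobolevFT s F ∧ sobolevEnergy s F ≤ ∫ ξ, g ξ := by
  have integrable : Integrable fun ξ => sobolevWeight s ξ * ‖F ξ‖ ^ 2 :=
    hg.mono' ((continuous_sobolevWeight s).mul (hF.norm.pow 2)).aestronglyMeasurable
      (.of_forall fun ξ =>
        (Real.norm_of_nonneg (sobolevWeight_mul_sq_nonneg s F ξ)).trans_le (hle ξ))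
  exact ⟨⟨hF, integrable⟩, integral_mono integrable hg hle⟩

lemma IsSobolevFT.const_mul (c : ℂ) (hF : IsSobolevFT s F) : IsSobolevFT s fun ξ => c * F ξ :=
  (of_le (F := fun ξ => c * F ξ) (continuous_const.mul hF.continuous)
    (hF.integrable.const_mul (‖c‖ ^ 2)) fun ξ => by rw [norm_mul]; exact (by ring : _ = _).le).1

lemma IsSobolevFT.add_and_energy_le (hF : IsSobolevFT s F) (hG : IsSobolevFT s G) :
    IsSobolevFT s (fun ξ => F ξ + G ξ) ∧
      sobolevEnergy s (fun ξ => F ξ + G ξ) ≤ 2 * (sobolevEnergy s F + sobolevEnergy s G) := by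
  rw [sobolevEnergy, sobolevEnergy, sobolevEnergy, ← integral_add hF.integrable hG.integrable,
    ← integral_const_mul]
  refine of_le (hF.continuous.add hG.continuous)
    ((hF.integrable.add hG.integrable).const_mul 2) fun ξ => ?_
  calc sobolevWeight s ξ * ‖F ξ + G ξ‖ ^ 2
      ≤ sobolevWeight s ξ * (2 * (‖F ξ‖ ^ 2 + ‖G ξ‖ ^ 2)) :=
        mul_le_mul_of_nonneg_left (norm_add_sq_le_two_mul _ _) (sobolevWeight_pos s ξ).le
    _ = 2 * (sobolevWeight s ξ * ‖F ξ‖ ^ 2 + sobolevWeight s ξ * ‖G ξ‖ ^ 2) := by ring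

lemma IsSobolevFT.sub_and_energy_le (hF : IsSobolevFT s F) (hG : IsSobolevFT s G) :
    IsSobolevFT s (fun ξ => F ξ - G ξ) ∧
      sobolevEnergy s (fun ξ => F ξ - G ξ) ≤ 2 * (sobolevEnergy s F + sobolevEnergy s G) := by
  have := hF.add_and_energy_le (hG.const_mul (-1))
  rw [sobolevEnergy_const_mul, norm_neg, norm_one, one_pow, one_mul] at this
  simpa only [neg_one_mul, ← sub_eq_add_neg] using this

lemma IsSobolevFT.sum_and_energy_le {ι : Type*} (t : Finset ι) {f : ι → E → ℂ}
    (hf : ∀ i ∈ t, IsSobolevFT s (f i)) :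
    IsSobolevFT s (fun ξ => ∑ i ∈ t, f i ξ) ∧
      sobolevEnergy s (fun ξ => ∑ i ∈ t, f i ξ) ≤ t.card * ∑ i ∈ t, sobolevEnergy s (f i) := by
  simp only [sobolevEnergy]
  rw [← integral_finsetSum t fun i hi => (hf i hi).integrable, ← integral_const_mul]
  refine of_le (continuous_finsetSum t fun i hi => (hf i hi).continuous)
    ((integrable_finsetSum t fun i hi => (hf i hi).integrable).const_mul _) fun ξ => ?_
  calc sobolevWeight s ξ * ‖∑ i ∈ t, f i ξ‖ ^ 2
      ≤ sobolevWeight s ξ * (t.card * ∑ i ∈ t, ‖f i ξ‖ ^ 2) :=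
        mul_le_mul_of_nonneg_left (norm_sum_sq_le_card_mul t _) (sobolevWeight_pos s ξ).le
    _ = t.card * ∑ i ∈ t, sobolevWeight s ξ * ‖f i ξ‖ ^ 2 := by rw [← Finset.mul_sum]; ring

lemma IsSobolevFT.mul_of_norm_le {m : E → ℂ} {C t : ℝ} (hF : IsSobolevFT s F)
    (hm : Continuous m) (hC : ∀ ξ, ‖m ξ‖ ≤ C * sobolevWeight t ξ) :
    IsSobolevFT (s - 2 * t) (fun ξ => m ξ * F ξ) ∧
      sobolevEnergy (s - 2 * t) (fun ξ => m ξ * F ξ) ≤ C ^ 2 * sobolevEnergy s F := by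
  rw [sobolevEnergy, sobolevEnergy, ← integral_const_mul]
  refine of_le (hm.mul hF.continuous) (hF.integrable.const_mul (C ^ 2)) fun ξ => ?_
  have weight_split : sobolevWeight s ξ =
      sobolevWeight (s - 2 * t) ξ * sobolevWeight t ξ * sobolevWeight t ξ := by
    rw [← sobolevWeight_add, ← sobolevWeight_add]
    ring_nf
  have weight_nonneg := (sobolevWeight_pos (s - 2 * t) ξ).le
  calc sobolevWeight (s - 2 * t) ξ * ‖m ξ * F ξ‖ ^ 2
      = sobolevWeight (s - 2 * t) ξ * (‖m ξ‖ ^ 2 * ‖F ξ‖ ^ 2) := by rw [norm_mul, mul_pow]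
    _ ≤ sobolevWeight (s - 2 * t) ξ * ((C * sobolevWeight t ξ) ^ 2 * ‖F ξ‖ ^ 2) := by
      gcongr
      exact hC ξ
    _ = C ^ 2 * (sobolevWeight s ξ * ‖F ξ‖ ^ 2) := by rw [weight_split]; ring

lemma IsSobolevFT.of_tendsto {f : ℕ → E → ℂ} {M : ℝ} (hf : ∀ n, IsSobolevFT s (f n))
    (hF : Continuous F) (hlim : ∀ ξ, Tendsto (fun n => f n ξ) atTop (𝓝 (F ξ)))
    (hM : ∀ᶠ n in atTop, sobolevEnergy s (f n) ≤ M) :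
    IsSobolevFT s F ∧ sobolevEnergy s F ≤ M := by
  have measurable : AEStronglyMeasurable fun ξ => sobolevWeight s ξ * ‖F ξ‖ ^ 2 :=
    ((continuous_sobolevWeight s).mul (hF.norm.pow 2)).aestronglyMeasurable
  have fatou : ∫⁻ ξ, ENNReal.ofReal (sobolevWeight s ξ * ‖F ξ‖ ^ 2) ≤ ENNReal.ofReal M :=
    calc ∫⁻ ξ, ENNReal.ofReal (sobolevWeight s ξ * ‖F ξ‖ ^ 2)
        = ∫⁻ ξ, liminf (fun n => ENNReal.ofReal (sobolevWeight s ξ * ‖f n ξ‖ ^ 2)) atTop := by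
          congr 1 with ξ
          exact (ENNReal.tendsto_ofReal (((hlim ξ).norm.pow 2).const_mul _)).liminf_eq.symm
      _ ≤ liminf (fun n => ∫⁻ ξ, ENNReal.ofReal (sobolevWeight s ξ * ‖f n ξ‖ ^ 2)) atTop :=
          lintegral_liminf_le' fun n => (hf n).integrable.aemeasurable.ennreal_ofReal
      _ ≤ ENNReal.ofReal M := by
          refine liminf_le_of_frequently_le' (hM.mono fun n hn => ?_).frequently
          rw [← ofReal_integral_eq_lintegral_ofReal (hf n).integrable
            (.of_forall (sobolevWeight_mul_sq_nonneg s (f n)))]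
          exact ENNReal.ofReal_le_ofReal hn
  have M_nonneg : 0 ≤ M := hM.exists.elim fun n hn => (sobolevEnergy_nonneg s (f n)).trans hn
  have nonneg := Eventually.of_forall (f := ae volume) (sobolevWeight_mul_sq_nonneg s F)
  refine ⟨⟨hF, measurable, (hasFiniteIntegral_iff_ofReal nonneg).2
    (fatou.trans_lt ENNReal.ofReal_lt_top)⟩, ?_⟩
  rw [sobolevEnergy, integral_eq_lintegral_of_nonneg_ae nonneg measurable]
  exact ENNReal.toReal_le_of_le_ofReal M_nonneg fatou

end SobolevEnergy

section Duality

variable {E : Type*} [NormedAddCommGroup E] {s : ℝ} {F H : E → ℂ}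

lemma sq_norm_mul_eq_weight_mul (s : ℝ) (F H : E → ℂ) (ξ : E) :
    ‖F ξ * H ξ‖ ^ 2 =
      sobolevWeight s ξ * ‖F ξ‖ ^ 2 * (sobolevWeight (-s) ξ * ‖H ξ‖ ^ 2) := by
  rw [norm_mul]
  linear_combination -(‖F ξ‖ * ‖H ξ‖) ^ 2 * sobolevWeight_neg_mul_cancel s ξ

variable [MeasureSpace E]

lemma IsSobolevFT.norm_integral_mul_sq_le (hF : IsSobolevFT s F) (hH : IsSobolevFT (-s) H) :
    ‖∫ ξ, F ξ * H ξ‖ ^ 2 ≤ sobolevEnergy s F * sobolevEnergy (-s) H :=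
  (pow_le_pow_left₀ (norm_nonneg _) (norm_integral_le_integral_norm _) 2).trans <|
    sq_integral_le_mul_of_sq_le hF.integrable hH.integrable (sobolevWeight_mul_sq_nonneg s F)
      (sobolevWeight_mul_sq_nonneg (-s) H) fun ξ => (sq_norm_mul_eq_weight_mul s F H ξ).le

variable [OpensMeasurableSpace E]

lemma IsSobolevFT.integrable_mul (hF : IsSobolevFT s F) (hH : IsSobolevFT (-s) H) :
    Integrable fun ξ => F ξ * H ξ := by
  refine (hF.integrable.add hH.integrable).mono'
    (hF.continuous.mul hH.continuous).aestronglyMeasurable (.of_forall fun ξ => ?_)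
  have hFξ := sobolevWeight_mul_sq_nonneg s F ξ
  have hHξ := sobolevWeight_mul_sq_nonneg (-s) H ξ
  refine abs_le_of_sq_le_sq' ?_ (add_nonneg hFξ hHξ) |>.2
  rw [sq_norm_mul_eq_weight_mul s]
  nlinarith

end Duality

section Convolution

open scoped Convolution

variable {E : Type*} [NormedAddCommGroup E] [NormedSpace ℝ E] [FiniteDimensional ℝ E]
  [MeasureSpace E] [BorelSpace E] [(volume : Measure E).IsAddHaarMeasure]
  {s : ℝ} {F G : E → ℂ}

lemma RapidDecay.isSobolevFT (hG : RapidDecay G) (s : ℝ) : IsSobolevFT s G :=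
  ⟨hG.continuous, hG.integrable_sobolevWeight_mul_norm_sq volume s⟩

lemma RapidDecay.comp_sub_left_and_energy_le (hG : RapidDecay G) (s : ℝ) (ξ : E) :
    IsSobolevFT s (fun η => G (ξ - η)) ∧ sobolevEnergy s (fun η => G (ξ - η)) ≤
      2 ^ |s| * sobolevEnergy |s| G * sobolevWeight s ξ := by
  have shifted := ((hG.isSobolevFT |s|).integrable.comp_sub_left ξ).const_mul
    (2 ^ |s| * sobolevWeight s ξ)
  have integral_shifted : ∫ η, 2 ^ |s| * sobolevWeight s ξ *
      (sobolevWeight |s| (ξ - η) * ‖G (ξ - η)‖ ^ 2) =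
      2 ^ |s| * sobolevEnergy |s| G * sobolevWeight s ξ := by
    rw [integral_const_mul,
      integral_sub_left_eq_self (fun η => sobolevWeight |s| η * ‖G η‖ ^ 2) volume ξ, sobolevEnergy]
    ring
  rw [← integral_shifted]
  refine IsSobolevFT.of_le (hG.continuous.comp (continuous_sub_left ξ)) shifted fun η => ?_
  have peetre := sobolevWeight_peetre s η ξ
  rw [← neg_sub ξ η, sobolevWeight_neg] at peetre
  calc sobolevWeight s η * ‖G (ξ - η)‖ ^ 2
      ≤ 2 ^ |s| * sobolevWeight |s| (ξ - η) * sobolevWeight s ξ * ‖G (ξ - η)‖ ^ 2 :=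
        mul_le_mul_of_nonneg_right peetre (sq_nonneg _)
    _ = _ := by ring

lemma RapidDecay.tendsto_energy_comp_sub (hG : RapidDecay G) (s : ℝ) (ξ₀ : E) :
    Tendsto (fun ξ => sobolevEnergy s fun η => G (ξ - η) - G (ξ₀ - η)) (𝓝 ξ₀) (𝓝 0) := by
  set d : ℝ := -(Module.finrank ℝ E : ℝ) / 2 - 1 with hd
  obtain ⟨A, dominated⟩ := hG.exists_sobolevWeight_mul_norm_sub_sq_le s d ξ₀
  have dominating : Integrable fun η : E => A * sobolevWeight d (ξ₀ - η) :=
    ((integrable_sobolevWeight volume (by linarith)).comp_sub_left ξ₀).const_mul A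
  have := hG.continuous
  have := continuous_sobolevWeight (E := E) s
  have limit := tendsto_integral_filter_of_dominated_convergence (l := 𝓝 ξ₀)
    (F := fun ξ η => sobolevWeight s η * ‖G (ξ - η) - G (ξ₀ - η)‖ ^ 2) (f := fun _ => 0) _
    (.of_forall fun ξ => Continuous.aestronglyMeasurable (by fun_prop)) ?_ dominating
    (.of_forall fun η => ?_)
  · rwa [integral_zero] at limit
  · filter_upwards [dominated] with ξ hξ
    refine .of_forall fun η => ?_
    rw [Real.norm_of_nonneg (mul_nonneg (sobolevWeight_pos s η).le (sq_nonneg _))]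
    exact hξ η
  · have : Continuous fun ξ => sobolevWeight s η * ‖G (ξ - η) - G (ξ₀ - η)‖ ^ 2 := by fun_prop
    simpa using this.tendsto ξ₀

lemma IsSobolevFT.norm_convolution_sq_le (hF : IsSobolevFT s F) (hG : RapidDecay G) (ξ : E) :
    ‖(F ⋆[.mul ℂ ℂ] G) ξ‖ ^ 2 ≤
      2 ^ |s| * sobolevEnergy |s| G * sobolevWeight (-s) ξ * sobolevEnergy s F := by
  obtain ⟨shifted, energy_le⟩ := hG.comp_sub_left_and_energy_le (-s) ξ
  rw [abs_neg] at energy_le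
  calc ‖(F ⋆[.mul ℂ ℂ] G) ξ‖ ^ 2
      ≤ sobolevEnergy s F * sobolevEnergy (-s) fun η => G (ξ - η) :=
        hF.norm_integral_mul_sq_le shifted
    _ ≤ sobolevEnergy s F * (2 ^ |s| * sobolevEnergy |s| G * sobolevWeight (-s) ξ) :=
        mul_le_mul_of_nonneg_left energy_le (sobolevEnergy_nonneg s F)
    _ = _ := mul_comm _ _

lemma IsSobolevFT.norm_convolution_sub_sq_le (hF : IsSobolevFT s F) (hG : RapidDecay G)
    (ξ ξ₀ : E) : ‖(F ⋆[.mul ℂ ℂ] G) ξ - (F ⋆[.mul ℂ ℂ] G) ξ₀‖ ^ 2 ≤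
      sobolevEnergy s F * sobolevEnergy (-s) fun η => G (ξ - η) - G (ξ₀ - η) := by
  have shifted := fun x : E => (hG.comp_sub_left_and_energy_le (-s) x).1
  have difference : (F ⋆[.mul ℂ ℂ] G) ξ - (F ⋆[.mul ℂ ℂ] G) ξ₀ =
      ∫ η, F η * (G (ξ - η) - G (ξ₀ - η)) := by
    simp only [convolution_mul, mul_sub]
    exact (integral_sub (hF.integrable_mul (shifted ξ)) (hF.integrable_mul (shifted ξ₀))).symm
  rw [difference]
  exact hF.norm_integral_mul_sq_le ((shifted ξ).sub_and_energy_le (shifted ξ₀)).1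

lemma IsSobolevFT.continuous_convolution (hF : IsSobolevFT s F) (hG : RapidDecay G) :
    Continuous (F ⋆[.mul ℂ ℂ] G) := by
  refine continuous_iff_continuousAt.2 fun ξ₀ => tendsto_iff_norm_sub_tendsto_zero.2 ?_
  have vanishing := ((hG.tendsto_energy_comp_sub (-s) ξ₀).const_mul (sobolevEnergy s F)).sqrt
  rw [mul_zero, Real.sqrt_zero] at vanishing
  exact squeeze_zero (fun _ => norm_nonneg _)
    (fun ξ => Real.le_sqrt_of_sq_le (hF.norm_convolution_sub_sq_le hG ξ ξ₀)) vanishing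

lemma IsSobolevFT.sobolevWeight_mul_norm_convolution_sq_le (hF : IsSobolevFT s F)
    (hG : RapidDecay G) (ξ : E) : sobolevWeight s ξ * ‖(F ⋆[.mul ℂ ℂ] G) ξ‖ ^ 2 ≤
      2 ^ |s| * (∫ η, ‖G η‖) * ((fun η => sobolevWeight s η * ‖F η‖ ^ 2) ⋆[.mul ℝ ℝ]
        fun η => sobolevWeight |s| η * ‖G η‖) ξ := by
  set f : E → ℝ := fun η => sobolevWeight s η * ‖F η‖ ^ 2 with hf
  set K : E → ℝ := fun η => sobolevWeight |s| η * ‖G η‖ with hK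
  have K_nonneg : ∀ η, 0 ≤ K η := fun η => mul_nonneg (sobolevWeight_pos _ _).le (norm_nonneg _)
  have fK_integrable : Integrable fun η => f η * K (ξ - η) := by
    obtain ⟨C, hC⟩ := hG.decay (-|s|)
    have K_continuous : Continuous K := (continuous_sobolevWeight |s|).mul hG.continuous.norm
    refine hF.integrable.mul_bdd (c := C)
      (K_continuous.comp (continuous_sub_left ξ)).aestronglyMeasurable (.of_forall fun η => ?_)
    rw [Real.norm_of_nonneg (K_nonneg _)]
    calc K (ξ - η) ≤ sobolevWeight |s| (ξ - η) * (C * sobolevWeight (-|s|) (ξ - η)) :=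
          mul_le_mul_of_nonneg_left (hC _) (sobolevWeight_pos _ _).le
      _ = C := by linear_combination C * sobolevWeight_neg_mul_cancel |s| (ξ - η)
  have cauchy_schwarz : (∫ η, √(sobolevWeight s ξ) * ‖F η * G (ξ - η)‖) ^ 2 ≤
      (∫ η, ‖G (ξ - η)‖) * ∫ η, 2 ^ |s| * (f η * K (ξ - η)) := by
    refine sq_integral_le_mul_of_sq_le ((hG.integrable volume).norm.comp_sub_left ξ)
      (fK_integrable.const_mul _) (fun η => norm_nonneg _)
      (fun η => mul_nonneg (by positivity)
        (mul_nonneg (sobolevWeight_mul_sq_nonneg s F η) (K_nonneg _))) fun η => ?_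
    rw [mul_pow, Real.sq_sqrt (sobolevWeight_pos s ξ).le, norm_mul]
    calc sobolevWeight s ξ * (‖F η‖ * ‖G (ξ - η)‖) ^ 2
        ≤ 2 ^ |s| * sobolevWeight |s| (ξ - η) * sobolevWeight s η * (‖F η‖ * ‖G (ξ - η)‖) ^ 2 :=
          mul_le_mul_of_nonneg_right (sobolevWeight_peetre s ξ η) (sq_nonneg _)
      _ = _ := by rw [hf, hK]; ring
  rw [integral_const_mul, mul_pow, Real.sq_sqrt (sobolevWeight_pos s ξ).le,
    integral_sub_left_eq_self (fun η => ‖G η‖) volume ξ, integral_const_mul] at cauchy_schwarz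
  calc sobolevWeight s ξ * ‖(F ⋆[.mul ℂ ℂ] G) ξ‖ ^ 2
      ≤ sobolevWeight s ξ * (∫ η, ‖F η * G (ξ - η)‖) ^ 2 :=
        mul_le_mul_of_nonneg_left (pow_le_pow_left₀ (norm_nonneg _)
          (norm_integral_le_integral_norm _) 2) (sobolevWeight_pos s ξ).le
    _ ≤ (∫ ξ, ‖G ξ‖) * (2 ^ |s| * ∫ η, f η * K (ξ - η)) := cauchy_schwarz
    _ = _ := by rw [convolution_mul]; ring

lemma IsSobolevFT.convolution_and_energy_le (hF : IsSobolevFT s F) (hG : RapidDecay G) :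
    IsSobolevFT s (F ⋆[.mul ℂ ℂ] G) ∧ sobolevEnergy s (F ⋆[.mul ℂ ℂ] G) ≤
      2 ^ |s| * (∫ ξ, ‖G ξ‖) * (∫ ξ, sobolevWeight |s| ξ * ‖G ξ‖) * sobolevEnergy s F := by
  have K_integrable := hG.integrable_sobolevWeight_mul_norm volume |s|
  have integral_bound := integral_convolution (.mul ℝ ℝ) hF.integrable K_integrable
  obtain ⟨mem, energy_le⟩ := of_le (hF.continuous_convolution hG)
    ((hF.integrable.integrable_convolution (.mul ℝ ℝ) K_integrable).const_mul _)
    (hF.sobolevWeight_mul_norm_convolution_sq_le hG)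
  refine ⟨mem, energy_le.trans_eq ?_⟩
  rw [integral_const_mul, integral_bound, ContinuousLinearMap.mul_apply', sobolevEnergy]
  ring

end Convolution

section ConvolutionAdjoint

open scoped Convolution

variable {E : Type*} [NormedAddCommGroup E] {s : ℝ} {F G H : E → ℂ}

lemma RapidDecay.ofReal_norm (hG : RapidDecay G) : RapidDecay fun ξ => (‖G ξ‖ : ℂ) where
  continuous := continuous_ofReal.comp hG.continuous.norm
  decay := fun s => by simpa using hG.decay s

lemma IsSobolevFT.ofReal_norm [MeasureSpace E] (hF : IsSobolevFT s F) :
    IsSobolevFT s fun ξ => (‖F ξ‖ : ℂ) where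
  continuous := continuous_ofReal.comp hF.continuous.norm
  integrable := by simpa using hF.integrable

variable [NormedSpace ℝ E] [FiniteDimensional ℝ E]
  [MeasureSpace E] [BorelSpace E] [(volume : Measure E).IsAddHaarMeasure]

lemma IsSobolevFT.integrable_mul_rapidDecay (hF : IsSobolevFT s F) (hG : RapidDecay G) :
    Integrable fun ξ => F ξ * G ξ :=
  hF.integrable_mul (hG.isSobolevFT (-s))

lemma IsSobolevFT.integrable_prod_convolution_mul (hF : IsSobolevFT s F) (hG : RapidDecay G)
    (hH : RapidDecay H) :
    Integrable (fun p : E × E => F p.2 * G (p.1 - p.2) * H p.1) (volume.prod volume) := by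
  have := hF.continuous
  have := hG.continuous
  have := hH.continuous
  refine (integrable_prod_iff (Continuous.aestronglyMeasurable (by fun_prop))).2
    ⟨.of_forall fun ξ => ?_, ?_⟩
  · exact (hF.integrable_mul (hG.comp_sub_left_and_energy_le (-s) ξ).1).mul_const (H ξ)
  · refine (((hF.ofReal_norm.convolution_and_energy_le hG.ofReal_norm).1.integrable_mul_rapidDecay
      hH.ofReal_norm).norm).congr (.of_forall fun ξ => ?_)
    have real_convolution : ∫ η, (‖F η‖ : ℂ) * (‖G (ξ - η)‖ : ℂ) =
        ((∫ η, ‖F η * G (ξ - η)‖ : ℝ) : ℂ) := by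
      simp only [norm_mul, ← ofReal_mul, integral_complex_ofReal]
    simp only [convolution_mul, real_convolution, norm_mul _ (H ξ), integral_mul_const, norm_mul,
      norm_real, norm_norm]
    simp only [← norm_mul, Real.norm_of_nonneg (integral_nonneg fun _ => norm_nonneg _)]

lemma IsSobolevFT.integral_convolution_mul (hF : IsSobolevFT s F) (hG : RapidDecay G)
    (hH : RapidDecay H) : ∫ ξ, (F ⋆[.mul ℂ ℂ] G) ξ * H ξ =
      ∫ η, F η * (H ⋆[.mul ℂ ℂ] fun ζ => G (-ζ)) η := by
  calc ∫ ξ, (F ⋆[.mul ℂ ℂ] G) ξ * H ξ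
      = ∫ ξ, ∫ η, F η * G (ξ - η) * H ξ := by simp only [convolution_mul, integral_mul_const]
    _ = ∫ η, ∫ ξ, F η * G (ξ - η) * H ξ :=
        integral_integral_swap (hF.integrable_prod_convolution_mul hG hH)
    _ = _ := by
        simp only [convolution_mul, ← integral_const_mul, neg_sub, mul_assoc, mul_comm (H _)]

end ConvolutionAdjoint

section TestFunction

open scoped Convolution FourierTransform

/-- Smooth compactly supported functions. -/
structure IsTestFunction {E : Type*} [NormedAddCommGroup E] [NormedSpace ℝ E] (φ : E → ℂ) :
    Prop where
  contDiff : ContDiff ℝ ∞ φ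
  hasCompactSupport : HasCompactSupport φ

namespace IsTestFunction

section General

variable {E : Type*} [NormedAddCommGroup E] [NormedSpace ℝ E] {φ ψ : E → ℂ}

lemma comp_add_right (hφ : IsTestFunction φ) (a : E) : IsTestFunction fun x => φ (x + a) where
  contDiff := hφ.contDiff.comp (by fun_prop)
  hasCompactSupport := hφ.hasCompactSupport.comp_homeomorph (Homeomorph.addRight a)

lemma contDiff_mul {f : E → ℂ} (hf : ContDiff ℝ ∞ f) (hφ : IsTestFunction φ) :
    IsTestFunction fun x => f x * φ x :=
  ⟨hf.mul hφ.contDiff, hφ.hasCompactSupport.mul_left⟩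

lemma sub (hφ : IsTestFunction φ) (hψ : IsTestFunction ψ) : IsTestFunction fun x => φ x - ψ x :=
  ⟨hφ.contDiff.sub hψ.contDiff, hφ.hasCompactSupport.sub hψ.hasCompactSupport⟩

lemma sum {ι : Type*} (t : Finset ι) {φ : ι → E → ℂ} (hφ : ∀ j ∈ t, IsTestFunction (φ j)) :
    IsTestFunction fun x => ∑ j ∈ t, φ j x := by
  classical
  induction t using Finset.induction_on with
  | empty => exact ⟨contDiff_const, HasCompactSupport.zero⟩
  | insert j t hj ih =>
    simp only [Finset.sum_insert hj]
    have hφj := hφ j (Finset.mem_insert_self j t)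
    have hφt := ih fun i hi => hφ i (Finset.mem_insert_of_mem hi)
    exact ⟨hφj.contDiff.add hφt.contDiff, hφj.hasCompactSupport.add hφt.hasCompactSupport⟩

lemma integrable [MeasurableSpace E] [OpensMeasurableSpace E] (hφ : IsTestFunction φ)
    (μ : Measure E) [IsFiniteMeasureOnCompacts μ] : Integrable φ μ :=
  hφ.contDiff.continuous.integrable_of_hasCompactSupport hφ.hasCompactSupport

lemma ofReal_contDiffBump [HasContDiffBump E] [FiniteDimensional ℝ E] {c : E}
    (b : ContDiffBump c) : IsTestFunction fun x => (b x : ℂ) where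
  contDiff := ofRealCLM.contDiff.comp b.contDiff
  hasCompactSupport := b.hasCompactSupport.comp_left (g := fun x : ℝ => (x : ℂ)) ofReal_zero

end General

end IsTestFunction

open SchwartzMap in
lemma rapidDecay_schwartzMap {E : Type*} [NormedAddCommGroup E] [InnerProductSpace ℝ E]
    (f : 𝓢(E, ℂ)) : RapidDecay f where
  continuous := f.continuous
  decay := fun s => by
    have growth : Function.HasTemperateGrowth (sobolevWeight (-s) : E → ℝ) :=
      Function.hasTemperateGrowth_one_add_norm_sq_rpow E (-s)
    refine ⟨SchwartzMap.seminorm ℝ 0 0 (smulLeftCLM ℂ (sobolevWeight (-s)) f), fun ξ => ?_⟩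
    have weighted := norm_le_seminorm ℝ (smulLeftCLM ℂ (sobolevWeight (-s)) f) ξ
    rw [smulLeftCLM_apply_apply growth, norm_smul,
      Real.norm_of_nonneg (sobolevWeight_pos (-s) ξ).le] at weighted
    have := mul_le_mul_of_nonneg_left weighted (sobolevWeight_pos s ξ).le
    linear_combination this - ‖f ξ‖ * sobolevWeight_neg_mul_cancel s ξ

lemma rdot_eq_inner (x ξ : R2) : rdot x ξ = inner ℝ x ξ := by
  simp [rdot, PiLp.inner_apply, Fin.sum_univ_two, mul_comm]

lemma testFT_eq_integral_inner (φ : R2 → ℂ) (ξ : R2) :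
    testFT φ ξ = ∫ x, cexp (I * (inner ℝ x ξ : ℝ)) * φ x := by
  simp only [testFT, rdot_eq_inner]

lemma testFT_eq_fourierInv (φ : R2 → ℂ) (ξ : R2) : testFT φ ξ = 𝓕⁻ φ ((2 * π)⁻¹ • ξ) := by
  rw [Real.fourierInv_eq', testFT_eq_integral_inner]
  refine integral_congr_ae (.of_forall fun x => ?_)
  simp only [smul_eq_mul, inner_smul_right, mul_inv_cancel_left₀ Real.two_pi_pos.ne', mul_comm I]

lemma testFT_comp_add_right (φ : R2 → ℂ) (a ξ : R2) :
    testFT (fun x => φ (x + a)) ξ = cexp (-(I * (inner ℝ a ξ : ℝ))) * testFT φ ξ := by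
  rw [testFT_eq_integral_inner, testFT_eq_integral_inner, ← integral_const_mul,
    ← integral_add_right_eq_self (fun x => _ * (_ * φ x)) a]
  refine integral_congr_ae (.of_forall fun x => ?_)
  simp only [← mul_assoc, ← Complex.exp_add, inner_add_left]
  congr 2
  push_cast
  ring

variable {φ χ ψ : R2 → ℂ}

lemma IsTestFunction.integrable_exp_mul (hφ : IsTestFunction φ) (ξ : R2) :
    Integrable fun x => cexp (I * (inner ℝ x ξ : ℝ)) * φ x := by
  refine (hφ.integrable volume).bdd_mul (c := 1) (Continuous.aestronglyMeasurable (by fun_prop))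
    (.of_forall fun x => (norm_exp_I_mul_ofReal _).le)

lemma testFT_sub (hφ : IsTestFunction φ) (hψ : IsTestFunction ψ) (ξ : R2) :
    testFT (fun x => φ x - ψ x) ξ = testFT φ ξ - testFT ψ ξ := by
  simp only [testFT_eq_integral_inner, mul_sub]
  exact integral_sub (hφ.integrable_exp_mul ξ) (hψ.integrable_exp_mul ξ)

lemma IsTestFunction.rapidDecay_testFT (hφ : IsTestFunction φ) : RapidDecay (testFT φ) := by
  set f := hφ.hasCompactSupport.toSchwartzMap hφ.contDiff
  have scaled : testFT φ = SchwartzMap.compCLMOfContinuousLinearEquiv ℂ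
      (ContinuousLinearEquiv.smulLeft (Units.mk0 (2 * π)⁻¹ (by positivity))) (𝓕⁻ f) := by
    ext ξ
    rw [testFT_eq_fourierInv]
    exact congrFun (SchwartzMap.fourierInv_coe f).symm _
  exact scaled ▸ rapidDecay_schwartzMap _

lemma IsTestFunction.integral_exp_mul_testFT (hφ : IsTestFunction φ) (x : R2) :
    ∫ ξ, cexp (-(I * (inner ℝ x ξ : ℝ))) * testFT φ ξ = ((2 * π) ^ 2 : ℝ) * φ x := by
  have testFT_scaled : (fun ξ => testFT φ ((2 * π) • ξ)) = 𝓕⁻ φ := by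
    ext ξ
    rw [testFT_eq_fourierInv, inv_smul_smul₀ Real.two_pi_pos.ne']
  have fourierInv_integrable : Integrable (𝓕⁻ φ) :=
    testFT_scaled ▸ (hφ.rapidDecay_testFT.integrable volume).comp_smul Real.two_pi_pos.ne'
  have fourier_integrable : Integrable (𝓕 φ) := by
    simpa [Real.fourierInv_eq_fourier_neg] using fourierInv_integrable.comp_neg
  have inversion := congrFun (hφ.contDiff.continuous.fourier_fourierInv_eq (hφ.integrable volume)
    fourier_integrable) x
  have scaling := Measure.integral_comp_smul (volume : Measure R2)
    (fun ξ => cexp (-(I * (inner ℝ x ξ : ℝ))) * testFT φ ξ) (2 * π)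
  rw [finrank_euclideanSpace_fin, abs_of_pos (by positivity), eq_inv_smul_iff₀ (by positivity)]
    at scaling
  rw [← scaling, ← inversion, Real.fourier_eq', ← testFT_scaled, real_smul]
  congr 1
  refine integral_congr_ae (.of_forall fun ξ => ?_)
  simp only [smul_eq_mul, inner_smul_right, real_inner_comm x ξ]
  congr 2
  push_cast
  ring

/-- The kernel of the Fourier-side convolution operator that realises multiplication by `χ`. -/
def multiplierKernel (χ : R2 → ℂ) (ξ : R2) : ℂ := (((2 * π) ^ 2)⁻¹ : ℝ) * testFT χ (-ξ)

lemma IsTestFunction.rapidDecay_multiplierKernel (hχ : IsTestFunction χ) :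
    RapidDecay (multiplierKernel χ) :=
  hχ.rapidDecay_testFT.comp_neg.const_mul _

lemma testFT_mul (hχ : IsTestFunction χ) (hφ : IsTestFunction φ) :
    testFT (fun x => χ x * φ x) = testFT φ ⋆[.mul ℂ ℂ] fun ζ => multiplierKernel χ (-ζ) := by
  ext η
  have phase_integrable : Integrable
      (fun p : R2 × R2 => cexp (I * (inner ℝ p.2 (η - p.1) : ℝ)) * (testFT φ p.1 * χ p.2))
      (volume.prod volume) :=
    (((hφ.rapidDecay_testFT.integrable volume).mul_prod (hχ.integrable volume))).bdd_mul (c := 1)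
      (Continuous.aestronglyMeasurable (by fun_prop))
      (.of_forall fun p => (norm_exp_I_mul_ofReal _).le)
  have inner_integral : ∀ x, ∫ ξ, cexp (I * (inner ℝ x (η - ξ) : ℝ)) * (testFT φ ξ * χ x) =
      ((2 * π) ^ 2 : ℝ) * (cexp (I * (inner ℝ x η : ℝ)) * (χ x * φ x)) := fun x => by
    rw [mul_left_comm, mul_left_comm (_ : ℂ) (χ x), ← hφ.integral_exp_mul_testFT x, ← mul_assoc,
      ← integral_const_mul]
    refine integral_congr_ae (.of_forall fun ξ => ?_)
    have phase : cexp (I * (inner ℝ x (η - ξ) : ℝ)) =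
        cexp (-(I * (inner ℝ x ξ : ℝ))) * cexp (I * (inner ℝ x η : ℝ)) := by
      rw [← Complex.exp_add, inner_sub_right]
      push_cast
      ring_nf
    simp only [phase]
    ring
  calc testFT (fun x => χ x * φ x) η
      = (((2 * π) ^ 2)⁻¹ : ℝ) *
          ∫ x, ∫ ξ, cexp (I * (inner ℝ x (η - ξ) : ℝ)) * (testFT φ ξ * χ x) := by
        simp only [inner_integral, integral_const_mul]
        rw [← mul_assoc, ← ofReal_mul, inv_mul_cancel₀ (by positivity), ofReal_one, one_mul,
          testFT_eq_integral_inner]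
    _ = (((2 * π) ^ 2)⁻¹ : ℝ) *
          ∫ ξ, ∫ x, cexp (I * (inner ℝ x (η - ξ) : ℝ)) * (testFT φ ξ * χ x) := by
        rw [← integral_integral_swap phase_integrable]
    _ = _ := by
        rw [convolution_mul, ← integral_const_mul]
        refine integral_congr_ae (.of_forall fun ξ => ?_)
        simp only [multiplierKernel, neg_neg, testFT_eq_integral_inner χ,
          mul_left_comm _ (testFT φ ξ), integral_const_mul]

lemma IsSobolevFT.integral_convolution_multiplierKernel {s : ℝ} {F : R2 → ℂ}
    (hF : IsSobolevFT s F) (hχ : IsTestFunction χ) (hφ : IsTestFunction φ) :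
    ∫ ξ, (F ⋆[.mul ℂ ℂ] multiplierKernel χ) ξ * testFT φ ξ =
      ∫ η, F η * testFT (fun x => χ x * φ x) η := by
  rw [hF.integral_convolution_mul hχ.rapidDecay_multiplierKernel hφ.rapidDecay_testFT,
    testFT_mul hχ hφ]

lemma eq_zero_of_forall_integral_mul_exp_eq_zero {f : R2 → ℂ} (hf : Continuous f)
    (hfi : Integrable f) (h : ∀ a : R2, ∫ ξ, cexp (-(I * (inner ℝ a ξ : ℝ))) * f ξ = 0) :
    f = 0 := by
  have fourier_eq_zero : 𝓕 f = 0 := by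
    ext w
    rw [Pi.zero_apply, ← h ((2 * π) • w), Real.fourier_eq']
    refine integral_congr_ae (.of_forall fun ξ => ?_)
    simp only [smul_eq_mul, inner_smul_left, real_inner_comm w ξ]
    congr 2
    push_cast
    simp
    ring
  have inversion := hf.fourierInv_fourier_eq hfi (fourier_eq_zero ▸ integrable_zero R2 ℂ volume)
  rw [← inversion, fourier_eq_zero]
  ext ξ
  simp [Real.fourierInv_eq']

lemma exists_testFT_ne_zero (ξ : R2) : ∃ φ, IsTestFunction φ ∧ testFT φ ξ ≠ 0 := by
  let b : ContDiffBump (0 : R2) := ⟨1, 2, one_pos, one_lt_two⟩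
  refine ⟨fun x => cexp (-(I * (inner ℝ x ξ : ℝ))) * b x,
    (IsTestFunction.ofReal_contDiffBump b).contDiff_mul ?_, ?_⟩
  · exact (contDiff_const.mul
      (ofRealCLM.contDiff.comp (contDiff_id.inner ℝ contDiff_const))).neg.cexp
  · have bump_integral : testFT (fun x => cexp (-(I * (inner ℝ x ξ : ℝ))) * b x) ξ =
        ((∫ x, b x : ℝ) : ℂ) := by
      simp only [testFT_eq_integral_inner, ← mul_assoc, ← Complex.exp_add, add_neg_cancel,
        Complex.exp_zero, one_mul, integral_complex_ofReal]
    rw [bump_integral]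
    exact ofReal_ne_zero.2 b.integral_pos.ne'

lemma IsSobolevFT.eq_zero_of_forall_integral_mul_testFT {s : ℝ} {F : R2 → ℂ}
    (hF : IsSobolevFT s F) (h : ∀ φ, IsTestFunction φ → ∫ ξ, F ξ * testFT φ ξ = 0) : F = 0 := by
  ext ξ
  obtain ⟨φ, hφ, hφξ⟩ := exists_testFT_ne_zero ξ
  have product_eq_zero := eq_zero_of_forall_integral_mul_exp_eq_zero
    (hF.continuous.mul hφ.rapidDecay_testFT.continuous)
    (hF.integrable_mul_rapidDecay hφ.rapidDecay_testFT) fun a => by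
      rw [← h _ (hφ.comp_add_right a)]
      simp only [testFT_comp_add_right, mul_left_comm (F _), Pi.mul_apply]
  exact (mul_eq_zero.1 (congrFun product_eq_zero ξ)).resolve_right hφξ

end TestFunction

section SupportedTransforms

open scoped Convolution

/-- `F` is the Fourier transform of an element of `H̃^s(Γ)`; unbundled form of `HTildeElt`. -/
structure MemHTilde (s : ℝ) (Γ : Set R2) (F : R2 → ℂ) : Prop where
  isSobolevFT : IsSobolevFT s F
  integral_mul_testFT_eq_zero : ∀ φ, IsTestFunction φ → tsupport φ ∩ closure Γ = ∅ →
    ∫ ξ, F ξ * testFT φ ξ = 0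

variable {s : ℝ} {Γ : Set R2} {F G : R2 → ℂ}

lemma HTildeElt.memHTilde (f : HTildeElt s Γ) : MemHTilde s Γ f.ft where
  isSobolevFT := ⟨f.cont, f.mem⟩
  integral_mul_testFT_eq_zero := fun φ hφ => f.supp φ hφ.contDiff hφ.hasCompactSupport

/-- Bundles a transform satisfying `MemHTilde` as an element of `H̃^s(Γ)`. -/
def MemHTilde.toHTildeElt (hF : MemHTilde s Γ F) : HTildeElt s Γ where
  ft := F
  cont := hF.isSobolevFT.continuous
  mem := hF.isSobolevFT.integrable
  supp := fun φ hφ hφ' => hF.integral_mul_testFT_eq_zero φ ⟨hφ, hφ'⟩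

lemma MemHTilde.sub (hF : MemHTilde s Γ F) (hG : MemHTilde s Γ G) :
    MemHTilde s Γ fun ξ => F ξ - G ξ where
  isSobolevFT := (hF.isSobolevFT.sub_and_energy_le hG.isSobolevFT).1
  integral_mul_testFT_eq_zero := fun φ hφ hφΓ => by
    simp only [sub_mul]
    rw [integral_sub (hF.isSobolevFT.integrable_mul_rapidDecay hφ.rapidDecay_testFT)
      (hG.isSobolevFT.integrable_mul_rapidDecay hφ.rapidDecay_testFT),
      hF.integral_mul_testFT_eq_zero φ hφ hφΓ, hG.integral_mul_testFT_eq_zero φ hφ hφΓ, sub_zero]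

lemma MemHTilde.sum {ι : Type*} (t : Finset ι) {f : ι → R2 → ℂ}
    (hf : ∀ i ∈ t, MemHTilde s Γ (f i)) : MemHTilde s Γ fun ξ => ∑ i ∈ t, f i ξ where
  isSobolevFT := (IsSobolevFT.sum_and_energy_le t fun i hi => (hf i hi).isSobolevFT).1
  integral_mul_testFT_eq_zero := fun φ hφ hφΓ => by
    simp only [Finset.sum_mul]
    rw [integral_finsetSum t fun i hi =>
      (hf i hi).isSobolevFT.integrable_mul_rapidDecay hφ.rapidDecay_testFT]
    exact Finset.sum_eq_zero fun i hi => (hf i hi).integral_mul_testFT_eq_zero φ hφ hφΓ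

lemma MemHTilde.convolution_multiplierKernel_eq_self {χ : R2 → ℂ} (hF : MemHTilde s Γ F)
    (hχ : IsTestFunction χ) (hχΓ : ∀ᶠ x in 𝓝ˢ (closure Γ), χ x = 1) :
    F ⋆[.mul ℂ ℂ] multiplierKernel χ = F := by
  have convolution_mem := (hF.isSobolevFT.convolution_and_energy_le
    hχ.rapidDecay_multiplierKernel).1
  obtain ⟨U, hU, hΓU, hχU⟩ := eventually_nhdsSet_iff_exists.1 hχΓ
  have difference_eq_zero := (hF.isSobolevFT.sub_and_energy_le
    convolution_mem).1.eq_zero_of_forall_integral_mul_testFT fun φ hφ => by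
      have hχφ := hφ.contDiff_mul hχ.contDiff
      have integrable_F := fun ψ (hψ : IsTestFunction ψ) =>
        hF.isSobolevFT.integrable_mul_rapidDecay hψ.rapidDecay_testFT
      have tsupport_subset : tsupport (fun x => φ x - χ x * φ x) ⊆ Uᶜ :=
        closure_minimal (fun x hx hxU => hx (by simp [hχU x hxU])) hU.isClosed_compl
      simp only [sub_mul]
      rw [integral_sub (integrable_F φ hφ)
        (convolution_mem.integrable_mul_rapidDecay hφ.rapidDecay_testFT),
        hF.isSobolevFT.integral_convolution_multiplierKernel hχ hφ,
        ← integral_sub (integrable_F φ hφ) (integrable_F _ hχφ)]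
      simp only [← mul_sub, ← testFT_sub hφ hχφ]
      exact hF.integral_mul_testFT_eq_zero _ (hφ.sub hχφ) <| Set.disjoint_iff_inter_eq_empty.1 <|
        (Set.disjoint_compl_left_iff_subset.2 hΓU).mono_left tsupport_subset
  exact ((sub_eq_zero (a := F)).1 difference_eq_zero).symm

lemma exists_isTestFunction_eventually_eq_one {K : Set R2} (hK : Bornology.IsBounded K) :
    ∃ χ, IsTestFunction χ ∧ ∀ᶠ x in 𝓝ˢ (closure K), χ x = 1 := by
  obtain ⟨r, hr⟩ := hK.closure.subset_closedBall 0
  have hr' : (0 : ℝ) < |r| + 1 := by positivity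
  let b : ContDiffBump (0 : R2) := ⟨|r| + 1, |r| + 2, hr', by linarith⟩
  refine ⟨fun x => b x, .ofReal_contDiffBump b, eventually_nhdsSet_iff_exists.2
    ⟨Metric.ball 0 (|r| + 1), Metric.isOpen_ball, hr.trans ?_, fun x hx => ?_⟩⟩
  · exact Metric.closedBall_subset_ball (by linarith [le_abs_self r])
  · simp [b.one_of_mem_closedBall (Metric.ball_subset_closedBall hx)]

lemma MemHTilde.of_tendsto {f : ℕ → R2 → ℂ} {M A t : ℝ} (hf : ∀ n, MemHTilde s Γ (f n))
    (hF : Continuous F) (hlim : ∀ ξ, Tendsto (fun n => f n ξ) atTop (𝓝 (F ξ)))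
    (hM : ∀ n, sobolevEnergy s (f n) ≤ M) (hA : ∀ n ξ, ‖f n ξ‖ ≤ A * sobolevWeight t ξ) :
    MemHTilde s Γ F where
  isSobolevFT := (IsSobolevFT.of_tendsto (fun n => (hf n).isSobolevFT) hF hlim (.of_forall hM)).1
  integral_mul_testFT_eq_zero := fun φ hφ hφΓ => by
    have limit := tendsto_integral_of_dominated_convergence
      (F := fun n ξ => f n ξ * testFT φ ξ) (f := fun ξ => F ξ * testFT φ ξ)
      (fun ξ => A * (sobolevWeight t ξ * ‖testFT φ ξ‖))
      (fun n => ((hf n).isSobolevFT.integrable_mul_rapidDecay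
        hφ.rapidDecay_testFT).aestronglyMeasurable)
      ((hφ.rapidDecay_testFT.integrable_sobolevWeight_mul_norm volume t).const_mul A)
      (fun n => .of_forall fun ξ => by
        rw [norm_mul, ← mul_assoc]
        exact mul_le_mul_of_nonneg_right (hA n ξ) (norm_nonneg _))
      (.of_forall fun ξ => (hlim ξ).mul_const _)
    simp only [(hf _).integral_mul_testFT_eq_zero φ hφ hφΓ] at limit
    exact tendsto_nhds_unique limit tendsto_const_nhds

end SupportedTransforms

section EquicontinuousTransforms

open scoped Convolution

lemma exists_subseq_tendstoUniformlyOn_of_equicontinuous {X Y : Type*} [TopologicalSpace X]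
    [WeaklyLocallyCompactSpace X] [SigmaCompactSpace X] [MetricSpace Y] [ProperSpace Y]
    {u : ℕ → X → Y} (hu : Equicontinuous u)
    (hb : ∀ x, Bornology.IsBounded (Set.range fun n => u n x)) :
    ∃ φ : ℕ → ℕ, StrictMono φ ∧ ∃ L : X → Y, Continuous L ∧
      ∀ K, IsCompact K → TendstoUniformlyOn (fun n => u (φ n)) L atTop K := by
  have range_closure_equicontinuous : (closure (Set.range u)).Equicontinuous :=
    Set.Equicontinuous.closure (equicontinuous_iff_range.1 hu)
  have range_closure_compact : IsCompact (closure (Set.range u)) := by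
    have product_compact : IsCompact (Set.univ.pi fun x => closure (Set.range fun n => u n x)) :=
      isCompact_univ_pi fun x => (hb x).isCompact_closure
    refine product_compact.of_isClosed_subset isClosed_closure
      (closure_minimal ?_ product_compact.isClosed)
    rintro _ ⟨n, rfl⟩ x -
    exact subset_closure ⟨n, rfl⟩
  let S : Set C(X, Y) := {f | ⇑f ∈ closure (Set.range u)}
  have image_eq : ContinuousMap.toFun '' S = closure (Set.range u) := by
    ext f
    refine ⟨?_, fun hf => ⟨⟨f, range_closure_equicontinuous.continuous ⟨f, hf⟩⟩, hf, rfl⟩⟩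
    rintro ⟨g, hg, rfl⟩
    exact hg
  have S_compact : IsCompact S :=
    ArzelaAscoli.isCompact_of_equicontinuous S (image_eq ▸ range_closure_compact)
      (range_closure_equicontinuous.comp fun f : S => ⟨f.1, f.2⟩)
  obtain ⟨L, -, φ, hφ, hL⟩ := S_compact.tendsto_subseq
    (x := fun n => ⟨u n, hu.continuous n⟩) fun n => subset_closure ⟨n, rfl⟩
  exact ⟨φ, hφ, L, L.continuous, fun K hK =>
    ContinuousMap.tendsto_iff_forall_isCompact_tendstoUniformlyOn.1 hL K hK⟩

variable {s M : ℝ} {Γ : Set R2}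

lemma exists_norm_sq_le_of_memHTilde (s : ℝ) (hΓ : Bornology.IsBounded Γ) :
    ∃ C, 0 ≤ C ∧ ∀ F, MemHTilde s Γ F →
      ∀ ξ, ‖F ξ‖ ^ 2 ≤ C * sobolevWeight (-s) ξ * sobolevEnergy s F := by
  obtain ⟨χ, hχ, hχΓ⟩ := exists_isTestFunction_eventually_eq_one hΓ
  refine ⟨2 ^ |s| * sobolevEnergy |s| (multiplierKernel χ),
    mul_nonneg (by positivity) (sobolevEnergy_nonneg _ _), fun F hF ξ => ?_⟩
  have pointwise := hF.isSobolevFT.norm_convolution_sq_le hχ.rapidDecay_multiplierKernel ξ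
  rwa [hF.convolution_multiplierKernel_eq_self hχ hχΓ] at pointwise

lemma equicontinuous_of_memHTilde {ι : Type*} (hΓ : Bornology.IsBounded Γ) {u : ι → R2 → ℂ}
    (hu : ∀ i, MemHTilde s Γ (u i)) (hM : ∀ i, sobolevEnergy s (u i) ≤ M) : Equicontinuous u := by
  obtain ⟨χ, hχ, hχΓ⟩ := exists_isTestFunction_eventually_eq_one hΓ
  have hκ := hχ.rapidDecay_multiplierKernel
  refine fun ξ₀ => Metric.equicontinuousAt_of_continuity_modulus
    (fun ξ => √(M * sobolevEnergy (-s) fun η =>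
      multiplierKernel χ (ξ - η) - multiplierKernel χ (ξ₀ - η))) ?_ u (.of_forall fun ξ i => ?_)
  · simpa using ((hκ.tendsto_energy_comp_sub (-s) ξ₀).const_mul M).sqrt
  · have modulus := (hu i).isSobolevFT.norm_convolution_sub_sq_le hκ ξ ξ₀
    rw [(hu i).convolution_multiplierKernel_eq_self hχ hχΓ] at modulus
    rw [dist_comm, dist_eq_norm]
    exact Real.le_sqrt_of_sq_le (modulus.trans
      (mul_le_mul_of_nonneg_right (hM i) (sobolevEnergy_nonneg _ _)))

lemma exists_subseq_tendstoUniformlyOn_of_memHTilde (hΓ : Bornology.IsBounded Γ) {u : ℕ → R2 → ℂ}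
    (hu : ∀ n, MemHTilde s Γ (u n)) (hM : ∀ n, sobolevEnergy s (u n) ≤ M) :
    ∃ φ : ℕ → ℕ, StrictMono φ ∧ ∃ L, MemHTilde s Γ L ∧
      ∀ K, IsCompact K → TendstoUniformlyOn (fun n => u (φ n)) L atTop K := by
  obtain ⟨C, hC, hCu⟩ := exists_norm_sq_le_of_memHTilde s hΓ
  have pointwise : ∀ n ξ, ‖u n ξ‖ ≤ √(C * M) * sobolevWeight (-s / 2) ξ := fun n ξ => by
    rw [← Real.sqrt_sq (sobolevWeight_pos (-s / 2) ξ).le, ← Real.sqrt_mul' _ (sq_nonneg _), sq,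
      ← sobolevWeight_add, add_halves]
    refine Real.le_sqrt_of_sq_le ((hCu _ (hu n) ξ).trans ?_)
    rw [mul_right_comm]
    exact mul_le_mul_of_nonneg_right (mul_le_mul_of_nonneg_left (hM n) hC)
      (sobolevWeight_pos _ _).le
  obtain ⟨φ, hφ, L, hL, hlim⟩ := exists_subseq_tendstoUniformlyOn_of_equicontinuous
    (equicontinuous_of_memHTilde hΓ hu hM) fun ξ =>
      isBounded_iff_forall_norm_le.2 ⟨_, Set.forall_mem_range.2 fun n => pointwise n ξ⟩
  refine ⟨φ, hφ, L, .of_tendsto (fun n => hu (φ n)) hL (fun ξ => ?_) (fun n => hM (φ n))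
    fun n => pointwise (φ n), hlim⟩
  exact (hlim {ξ} isCompact_singleton).tendsto_at rfl

end EquicontinuousTransforms

section LocalCones

/-- The interior cone property of `closure Γ`, locally uniform: near every point of `closure Γ` some
open cone of directions, truncated at a fixed length, leads from points of `closure Γ` back into
`closure Γ`. Besides Lipschitz domains it covers, for example, slit discs. -/
def HasLocalCones {E : Type*} [NormedAddCommGroup E] [NormedSpace ℝ E] (Γ : Set E) : Prop :=
  ∀ x ∈ closure Γ, ∃ a₀ : E, ∀ᶠ p in 𝓝 x ×ˢ 𝓝 a₀,
    p.1 ∈ closure Γ → ∀ t ∈ Set.Icc (0 : ℝ) 1, p.1 + t • p.2 ∈ closure Γ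

lemma add_smul_mem_ball {E : Type*} [NormedAddCommGroup E] [NormedSpace ℝ E] {x y a : E}
    {r t : ℝ} (hy : y ∈ Metric.ball x (r / 2)) (ha : ‖a‖ < r / 2) (ht : t ∈ Set.Icc (0 : ℝ) 1) :
    y + t • a ∈ Metric.ball x r := by
  rw [mem_ball_iff_norm] at hy ⊢
  calc ‖y + t • a - x‖ = ‖y - x + t • a‖ := by congr 1; abel
    _ ≤ ‖y - x‖ + ‖t • a‖ := norm_add_le _ _
    _ ≤ ‖y - x‖ + ‖a‖ := by
      rw [norm_smul, Real.norm_of_nonneg ht.1]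
      gcongr
      exact mul_le_of_le_one_left (norm_nonneg a) ht.2
    _ < r := by linarith

lemma lt_add_of_lipschitzWith_of_le {f : ℝ → ℝ} {L : ℝ≥0} (hf : LipschitzWith L f)
    {u v a b t : ℝ} (hv : f u ≤ v) (hab : L * |a| < b) (ht : 0 < t) :
    f (u + t * a) < v + t * b := by
  have lipschitz_step : f (u + t * a) - f u ≤ L * (t * |a|) := by
    have := hf.dist_le_mul (u + t * a) u
    rw [Real.dist_eq, Real.dist_eq, add_sub_cancel_left, abs_mul, abs_of_pos ht] at this
    exact (le_abs_self _).trans this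
  have := mul_lt_mul_of_pos_left hab ht
  linarith

variable {Γ U : Set R2}

lemma le_of_mem_closure_of_mem_chart {e : R2 ≃ₗᵢ[ℝ] R2} {f : ℝ → ℝ} (hf : Continuous f)
    (hU : IsOpen U) (hΓ : ∀ y ∈ U, (y ∈ Γ ↔ f (e y 0) < e y 1)) {y : R2} (hyU : y ∈ U)
    (hy : y ∈ closure Γ) : f (e y 0) ≤ e y 1 := by
  have he := e.continuous
  have epigraph_closed : IsClosed {z : R2 | f (e z 0) ≤ e z 1} :=
    isClosed_le (by fun_prop) (by fun_prop)
  exact closure_minimal (fun z hz => ((hΓ z hz.1).1 hz.2).le) epigraph_closed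
    (hU.inter_closure ⟨hyU, hy⟩)

lemma eventually_add_smul_mem_of_chart {e : R2 ≃ₗᵢ[ℝ] R2} {f : ℝ → ℝ} {L : ℝ≥0}
    (hf : LipschitzWith L f) (hU : IsOpen U) (hΓ : ∀ y ∈ U, (y ∈ Γ ↔ f (e y 0) < e y 1))
    {x : R2} (hx : x ∈ U) :
    ∃ a₀ : R2, ∀ᶠ p in 𝓝 x ×ˢ 𝓝 a₀, p.1 ∈ closure Γ →
      ∀ t ∈ Set.Icc (0 : ℝ) 1, p.1 + t • p.2 ∈ closure Γ := by
  obtain ⟨r, hr, ball_subset⟩ := Metric.isOpen_iff.1 hU x hx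
  have directions_open : IsOpen {a : R2 | ‖a‖ < r / 2 ∧ L * |e a 0| < e a 1} := by
    have he := e.continuous
    rw [Set.ofPred_and]
    exact (isOpen_lt (by fun_prop) (by fun_prop)).inter (isOpen_lt (by fun_prop) (by fun_prop))
  have vertical_mem : e.symm !₂[0, r / 4] ∈ {a : R2 | ‖a‖ < r / 2 ∧ L * |e a 0| < e a 1} := by
    refine ⟨?_, by simpa using hr⟩
    rw [e.symm.norm_map, EuclideanSpace.norm_eq]
    simp only [Fin.sum_univ_two, Matrix.cons_val_zero, Matrix.cons_val_one,
      Real.norm_eq_abs, sq_abs, zero_pow two_ne_zero, zero_add, Real.sqrt_sq_eq_abs]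
    rw [abs_of_pos (by positivity)]
    linarith
  refine ⟨e.symm !₂[0, r / 4], ?_⟩
  filter_upwards [prod_mem_prod (Metric.ball_mem_nhds x (half_pos hr))
    (directions_open.mem_nhds vertical_mem)]
  rintro ⟨y, a⟩ ⟨hy, ha, cone⟩ hyΓ t ht
  rcases ht.1.eq_or_lt with rfl | ht0
  · simpa using hyΓ
  · have hyU := ball_subset (Metric.ball_subset_ball (half_le_self hr.le) hy)
    refine subset_closure ((hΓ _ (ball_subset (add_smul_mem_ball hy ha ht))).2 ?_)
    simpa using lt_add_of_lipschitzWith_of_le hf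
      (le_of_mem_closure_of_mem_chart hf.continuous hU hΓ hyU hyΓ) cone ht0

lemma IsLipschitzDomain.hasLocalCones (hΓ : IsLipschitzDomain Γ) : HasLocalCones Γ := by
  obtain ⟨Γ_open, -, -, charts⟩ := hΓ
  intro x hx
  by_cases hxΓ : x ∈ Γ
  · obtain ⟨r, hr, ball_subset⟩ := Metric.isOpen_iff.1 Γ_open x hxΓ
    refine ⟨0, ?_⟩
    filter_upwards [prod_mem_prod (Metric.ball_mem_nhds x (half_pos hr))
      (Metric.ball_mem_nhds (0 : R2) (half_pos hr))]
    rintro ⟨y, a⟩ ⟨hy, ha⟩ - t ht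
    exact subset_closure (ball_subset (add_smul_mem_ball hy (mem_ball_zero_iff.1 ha) ht))
  · obtain ⟨e, L, f, U, hf, hU, hxU, hUΓ⟩ := charts x (Γ_open.frontier_eq ▸ ⟨hx, hxΓ⟩)
    exact eventually_add_smul_mem_of_chart hf hU hUΓ hxU

/-- Translating the part of `closure Γ` under `supp χ` by `t • a`, for `0 ≤ t ≤ 1` and any `a` with
`θ a ≠ 0`, stays in `closure Γ`: the geometric reason why averaging over `a` with density `θ`
preserves supports in `closure Γ` after a cut-off by `χ`. -/
def SweepsWithin {E : Type*} [NormedAddCommGroup E] [NormedSpace ℝ E] (Γ : Set E)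
    (χ θ : E → ℂ) : Prop :=
  ∀ y ∈ closure Γ, y ∈ tsupport χ → ∀ a, θ a ≠ 0 → ∀ t ∈ Set.Icc (0 : ℝ) 1,
    y + t • a ∈ closure Γ

lemma testFT_zero (φ : R2 → ℂ) : testFT φ 0 = ∫ x, φ x := by
  simp [testFT, rdot]

lemma exists_isTestFunction_ball_testFT_eq_one (a₀ : R2) {ρ : ℝ} (hρ : 0 < ρ) :
    ∃ θ, IsTestFunction θ ∧ testFT θ 0 = 1 ∧ ∀ a, θ a ≠ 0 → a ∈ Metric.ball a₀ ρ := by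
  let b : ContDiffBump a₀ := ⟨ρ / 2, ρ, half_pos hρ, half_lt_self hρ⟩
  refine ⟨fun a => ((b.normed volume a : ℝ) : ℂ), ⟨ofRealCLM.contDiff.comp b.contDiff_normed,
    (b.hasCompactSupport_normed (μ := volume)).comp_left ofReal_zero⟩, ?_, fun a ha => ?_⟩
  · rw [testFT_zero, integral_complex_ofReal, b.integral_normed, ofReal_one]
  · exact (b.support_normed_eq (μ := volume)) ▸ Function.mem_support.2 (ofReal_ne_zero.1 ha)

lemma exists_isTestFunction_partition {ι : Type*} [Fintype ι] {K : Set R2} (hK : IsCompact K)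
    {U : ι → Set R2} (hU : ∀ i, IsOpen (U i)) (hbdd : ∀ i, Bornology.IsBounded (U i))
    (hKU : K ⊆ ⋃ i, U i) :
    ∃ χ : ι → R2 → ℂ, (∀ i, IsTestFunction (χ i)) ∧ (∀ i, tsupport (χ i) ⊆ U i) ∧
      ∀ᶠ x in 𝓝ˢ K, ∑ i, χ i x = 1 := by
  obtain ⟨L, L_compact, K_subset, L_subset⟩ := exists_compact_between hK (isOpen_iUnion hU) hKU
  obtain ⟨f, hf⟩ := SmoothPartitionOfUnity.exists_isSubordinate (modelWithCornersSelf ℝ R2)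
    L_compact.isClosed U hU L_subset
  have tsupport_subset (i) : tsupport (fun x => ((f i x : ℝ) : ℂ)) ⊆ U i :=
    (tsupport_comp_subset (g := ofReal) ofReal_zero (f i)).trans (hf i)
  refine ⟨fun i x => ((f i x : ℝ) : ℂ),
    fun i => ⟨ofRealCLM.contDiff.comp (f i).contMDiff.contDiff, ?_⟩, tsupport_subset, ?_⟩
  · exact Metric.isCompact_of_isClosed_isBounded (isClosed_tsupport _)
      ((hbdd i).subset (tsupport_subset i))
  · refine eventually_nhdsSet_iff_exists.2 ⟨interior L, isOpen_interior, K_subset, fun x hx => ?_⟩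
    rw [← ofReal_sum, ← finsum_eq_sum_of_fintype, f.sum_eq_one (interior_subset hx), ofReal_one]

lemma HasLocalCones.exists_partition (hΓ : HasLocalCones Γ) (hb : Bornology.IsBounded Γ) :
    ∃ (ι : Type) (_ : Fintype ι) (χ θ : ι → R2 → ℂ), (∀ j, IsTestFunction (χ j)) ∧
      (∀ j, IsTestFunction (θ j)) ∧ (∀ j, testFT (θ j) 0 = 1) ∧ (∀ j, SweepsWithin Γ (χ j) (θ j)) ∧
      ∀ᶠ x in 𝓝ˢ (closure Γ), ∑ j, χ j x = 1 := by
  choose! a₀ cone using hΓ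
  have cone_balls (x) (hx : x ∈ closure Γ) : ∃ r > 0, ∀ y ∈ Metric.ball x r,
      ∀ a ∈ Metric.ball (a₀ x) r, y ∈ closure Γ → ∀ t ∈ Set.Icc (0 : ℝ) 1,
        y + t • a ∈ closure Γ := by
    have := cone x hx
    rw [← nhds_prod_eq, Metric.eventually_nhds_iff_ball] at this
    obtain ⟨r, hr, hcone⟩ := this
    exact ⟨r, hr, fun y hy a ha => hcone (y, a) (ball_prod_same x (a₀ x) r ▸ ⟨hy, ha⟩)⟩
  choose! r hr sweep using cone_balls
  obtain ⟨s, hs, cover⟩ := hb.isCompact_closure.elim_nhds_subcover (fun x => Metric.ball x (r x))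
    fun x hx => Metric.ball_mem_nhds x (hr x hx)
  obtain ⟨χ, hχ, χ_supp, χ_sum⟩ := exists_isTestFunction_partition (ι := s) hb.isCompact_closure
    (U := fun x => Metric.ball x.1 (r x)) (fun _ => Metric.isOpen_ball)
    (fun _ => Metric.isBounded_ball) (by simpa [Set.iUnion_subtype] using cover)
  choose θ hθ θ_mean θ_supp using fun x : s =>
    exists_isTestFunction_ball_testFT_eq_one (a₀ x) (hr x (hs x x.2))
  exact ⟨s, inferInstance, χ, θ, hχ, hθ, θ_mean, fun x y hy hyχ a ha =>
    sweep x (hs x x.2) y (χ_supp x hyχ) a (θ_supp x a ha) hy, χ_sum⟩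

end LocalCones

section RayMean

variable {E : Type*} [NormedAddCommGroup E] [NormedSpace ℝ E] {G : E → ℂ}

/-- The mean of `G` over the segment from `0` to `ξ`. It turns the symbol of a derivative into a
symbol of order `-1`, which is how the line integrals of the Poincaré lemma act on the Fourier
side. -/
def rayMean (G : E → ℂ) (ξ : E) : ℂ := ∫ t in (0 : ℝ)..1, G (t • ξ)

lemma RapidDecay.continuous_rayMean (hG : RapidDecay G) : Continuous (rayMean G) :=
  intervalIntegral.continuous_parametric_intervalIntegral_of_continuous'
    (f := fun ξ t => G (t • ξ)) (hG.continuous.comp (by fun_prop)) 0 1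

lemma hasDerivAt_mul_sobolevWeight_smul (ξ : E) (t : ℝ) :
    HasDerivAt (fun t : ℝ => t * sobolevWeight (-(1 / 2)) (t • ξ))
      (sobolevWeight (-(3 / 2)) (t • ξ)) t := by
  have weight_eq (s u : ℝ) : sobolevWeight s (u • ξ) = (1 + u ^ 2 * ‖ξ‖ ^ 2) ^ s := by
    rw [sobolevWeight, norm_smul, mul_pow, Real.norm_eq_abs, sq_abs]
  simp only [weight_eq]
  have base_pos : 0 < 1 + t ^ 2 * ‖ξ‖ ^ 2 := by positivity
  have base_deriv : HasDerivAt (fun u : ℝ => 1 + u ^ 2 * ‖ξ‖ ^ 2) (2 * t * ‖ξ‖ ^ 2) t := by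
    simpa using ((hasDerivAt_pow 2 t).mul_const (‖ξ‖ ^ 2)).const_add 1
  refine ((hasDerivAt_id t).mul (base_deriv.rpow_const (p := -(1 / 2))
    (.inl base_pos.ne'))).congr_deriv ?_
  rw [show (-(1 / 2) : ℝ) = -(3 / 2) + 1 by norm_num, Real.rpow_add base_pos, Real.rpow_one,
    add_sub_cancel_right, id]
  ring

lemma integral_sobolevWeight_smul (ξ : E) :
    ∫ t in (0 : ℝ)..1, sobolevWeight (-(3 / 2)) (t • ξ) = sobolevWeight (-(1 / 2)) ξ := by
  rw [intervalIntegral.integral_eq_sub_of_hasDerivAt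
    (fun t _ => hasDerivAt_mul_sobolevWeight_smul ξ t)
    (((continuous_sobolevWeight _).comp (by fun_prop)).intervalIntegrable 0 1)]
  simp

lemma RapidDecay.exists_norm_rayMean_le (hG : RapidDecay G) :
    ∃ C, ∀ ξ, ‖rayMean G ξ‖ ≤ C * sobolevWeight (-(1 / 2)) ξ := by
  obtain ⟨C, hC⟩ := hG.decay (-(3 / 2))
  refine ⟨C, fun ξ => ?_⟩
  rw [← integral_sobolevWeight_smul, ← intervalIntegral.integral_const_mul]
  exact intervalIntegral.norm_integral_le_of_norm_le zero_le_one (.of_forall fun t _ => hC _)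
    ((((continuous_sobolevWeight _).comp (by fun_prop)).const_mul C).intervalIntegrable 0 1)

end RayMean

section PoincareMultiplier

open scoped Convolution

variable {s : ℝ} {Γ : Set R2} {A A₁ A₂ F θ χ φ : R2 → ℂ}

/-- The first moment density `a ↦ aᵢ θ(a)`. -/
def firstMoment (θ : R2 → ℂ) (i : Fin 2) (a : R2) : ℂ := (a i : ℂ) * θ a

lemma IsTestFunction.isTestFunction_firstMoment (hθ : IsTestFunction θ) (i : Fin 2) :
    IsTestFunction (firstMoment θ i) :=
  hθ.contDiff_mul (ofRealCLM.contDiff.comp (by fun_prop : ContDiff ℝ ∞ fun a : R2 => a i))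

/-- The symbol of `f ↦ ∫ θ(a) aᵢ ∫₀¹ f(· - t a) dt da`, the Poincaré line integral in the
direction `a`, averaged over `a` with density `θ`. -/
def poincareMultiplier (θ : R2 → ℂ) (i : Fin 2) (ξ : R2) : ℂ :=
  rayMean (testFT (firstMoment θ i)) (-ξ)

lemma IsTestFunction.continuous_poincareMultiplier (hθ : IsTestFunction θ) (i : Fin 2) :
    Continuous (poincareMultiplier θ i) :=
  (hθ.isTestFunction_firstMoment i).rapidDecay_testFT.continuous_rayMean.comp continuous_neg

lemma IsTestFunction.exists_norm_poincareMultiplier_le (hθ : IsTestFunction θ) :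
    ∃ C, ∀ i ξ, ‖poincareMultiplier θ i ξ‖ ≤ C * sobolevWeight (-(1 / 2)) ξ := by
  choose C hC using fun i =>
    (hθ.isTestFunction_firstMoment i).rapidDecay_testFT.exists_norm_rayMean_le
  refine ⟨max (C 0) (C 1), fun i ξ => (sobolevWeight_neg _ ξ ▸ hC i (-ξ)).trans ?_⟩
  refine mul_le_mul_of_nonneg_right ?_ (sobolevWeight_pos _ ξ).le
  fin_cases i
  exacts [le_max_left _ _, le_max_right _ _]

lemma IsTestFunction.hasDerivAt_testFT_smul (hθ : IsTestFunction θ) (η : R2) (t : ℝ) :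
    HasDerivAt (fun t : ℝ => testFT θ (t • η))
      (I * ((η 0 : ℂ) * testFT (firstMoment θ 0) (t • η) +
        (η 1 : ℂ) * testFT (firstMoment θ 1) (t • η))) t := by
  have hθ_continuous := hθ.contDiff.continuous
  have phase_deriv (a : R2) (u : ℝ) : HasDerivAt
      (fun u : ℝ => cexp (I * (inner ℝ a (u • η) : ℝ)) * θ a)
      (cexp (I * (inner ℝ a (u • η) : ℝ)) * (I * (inner ℝ a η : ℝ)) * θ a) u := by
    simp only [inner_smul_right, ofReal_mul]
    have := ((hasDerivAt_id u).ofReal_comp.mul_const (inner ℝ a η : ℂ)).const_mul I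
    simpa using this.cexp.mul_const (θ a)
  have derivative := (hasDerivAt_integral_of_dominated_loc_of_deriv_le (μ := (volume : Measure R2))
    (x₀ := t) (bound := fun a => |inner ℝ a η| * ‖θ a‖) univ_mem
    (.of_forall fun u => (hθ.integrable_exp_mul (u • η)).aestronglyMeasurable)
    (hθ.integrable_exp_mul (t • η)) (Continuous.aestronglyMeasurable (by fun_prop))
    (.of_forall fun a u _ => by simp [norm_exp_I_mul_ofReal])
    ((by fun_prop : Continuous fun a => |inner ℝ a η| * ‖θ a‖).integrable_of_hasCompactSupport
      hθ.hasCompactSupport.norm.mul_left)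
    (.of_forall fun a u _ => phase_deriv a u)).2
  simp only [← testFT_eq_integral_inner] at derivative
  refine derivative.congr_deriv ?_
  rw [testFT_eq_integral_inner, testFT_eq_integral_inner, ← integral_const_mul,
    ← integral_const_mul, ← integral_add
      (((hθ.isTestFunction_firstMoment 0).integrable_exp_mul _).const_mul _)
      (((hθ.isTestFunction_firstMoment 1).integrable_exp_mul _).const_mul _), ← integral_const_mul]
  congr 1 with a
  simp only [firstMoment, ← rdot_eq_inner a η, rdot]
  push_cast
  ring

lemma IsTestFunction.dotFt_poincareMultiplier (hθ : IsTestFunction θ) (ξ : R2) :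
    I * dotFt (poincareMultiplier θ 0) (poincareMultiplier θ 1) ξ =
      testFT θ 0 - testFT θ (-ξ) := by
  have moment_continuous (i) : Continuous fun t : ℝ => testFT (firstMoment θ i) (t • -ξ) :=
    (hθ.isTestFunction_firstMoment i).rapidDecay_testFT.continuous.comp (by fun_prop)
  have moment_integrable (i) := ((moment_continuous i).const_mul
    (((-ξ) i : ℝ) : ℂ)).intervalIntegrable (μ := volume) 0 1
  have increment := intervalIntegral.integral_eq_sub_of_hasDerivAt
    (fun t _ => hθ.hasDerivAt_testFT_smul (-ξ) t)
    (((moment_integrable 0).add (moment_integrable 1)).const_mul I)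
  rw [intervalIntegral.integral_const_mul, intervalIntegral.integral_add (moment_integrable 0)
    (moment_integrable 1), intervalIntegral.integral_const_mul,
    intervalIntegral.integral_const_mul, one_smul, zero_smul] at increment
  simp only [dotFt, poincareMultiplier, rayMean]
  simp only [PiLp.neg_apply, ofReal_neg] at increment
  linear_combination -increment

lemma IsTestFunction.isSobolevFT_poincareMultiplier_mul (hθ : IsTestFunction θ)
    (hA : IsSobolevFT s A) (i : Fin 2) :
    IsSobolevFT (s + 1) fun ξ => poincareMultiplier θ i ξ * A ξ := by
  obtain ⟨C, hC⟩ := hθ.exists_norm_poincareMultiplier_le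
  have := (hA.mul_of_norm_le (hθ.continuous_poincareMultiplier i) (hC i)).1
  rwa [show s - 2 * -(1 / 2) = s + 1 by ring] at this

lemma IsSobolevFT.integral_testFT_smul_mul_testFT (hA : IsSobolevFT s A) (hθ : IsTestFunction θ)
    (hφ : IsTestFunction φ) (t : ℝ) :
    ∫ ξ, testFT θ (t • -ξ) * (A ξ * testFT φ ξ) =
      ∫ a, θ a * ∫ ξ, A ξ * testFT (fun x => φ (x + t • a)) ξ := by
  have A_continuous := hA.continuous
  have φ_continuous := hφ.rapidDecay_testFT.continuous
  have θ_continuous := hθ.contDiff.continuous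
  have integrable_prod : Integrable (fun p : R2 × R2 =>
      cexp (I * (inner ℝ p.2 (t • -p.1) : ℝ)) * θ p.2 * (A p.1 * testFT φ p.1))
      (volume.prod volume) := by
    refine ((hA.integrable_mul_rapidDecay hφ.rapidDecay_testFT).norm.mul_prod
      (hθ.integrable volume).norm).mono' (Continuous.aestronglyMeasurable (by fun_prop))
      (.of_forall fun p => ?_)
    rw [norm_mul, norm_mul, norm_exp_I_mul_ofReal, one_mul, mul_comm]
  calc ∫ ξ, testFT θ (t • -ξ) * (A ξ * testFT φ ξ)
      = ∫ ξ, ∫ a, cexp (I * (inner ℝ a (t • -ξ) : ℝ)) * θ a * (A ξ * testFT φ ξ) := by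
        simp only [testFT_eq_integral_inner θ, integral_mul_const]
    _ = ∫ a, ∫ ξ, cexp (I * (inner ℝ a (t • -ξ) : ℝ)) * θ a * (A ξ * testFT φ ξ) :=
        integral_integral_swap integrable_prod
    _ = _ := by
        simp only [← integral_const_mul, testFT_comp_add_right, inner_smul_right, inner_neg_right,
          inner_smul_left, mul_neg, ofReal_neg]
        congr 1 with a
        congr 1 with ξ
        simp only [conj_trivial]
        ring

lemma IsSobolevFT.integral_poincareMultiplier_mul_eq_zero (hA : IsSobolevFT s A)
    (hθ : IsTestFunction θ) (hφ : IsTestFunction φ) (i : Fin 2)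
    (h : ∀ a, θ a ≠ 0 → ∀ t ∈ Set.Icc (0 : ℝ) 1,
      ∫ ξ, A ξ * testFT (fun x => φ (x + t • a)) ξ = 0) :
    ∫ ξ, poincareMultiplier θ i ξ * A ξ * testFT φ ξ = 0 := by
  have moment_decay := (hθ.isTestFunction_firstMoment i).rapidDecay_testFT
  have moment_continuous := moment_decay.continuous
  have A_continuous := hA.continuous
  have φ_continuous := hφ.rapidDecay_testFT.continuous
  have integrable_prod : Integrable (fun p : R2 × ℝ =>
      testFT (firstMoment θ i) (p.2 • -p.1) * (A p.1 * testFT φ p.1))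
      (volume.prod (volume.restrict (Set.Ioc 0 1))) := by
    obtain ⟨C, hC⟩ := moment_decay.decay 0
    refine ((hA.integrable_mul_rapidDecay hφ.rapidDecay_testFT).norm.mul_prod
      (integrable_const C)).mono' (Continuous.aestronglyMeasurable (by fun_prop))
      (.of_forall fun p => ?_)
    rw [norm_mul, mul_comm]
    refine mul_le_mul_of_nonneg_left ((hC _).trans_eq ?_) (norm_nonneg _)
    rw [sobolevWeight, Real.rpow_zero, mul_one]
  calc ∫ ξ, poincareMultiplier θ i ξ * A ξ * testFT φ ξ
      = ∫ ξ, ∫ t in Set.Ioc (0 : ℝ) 1,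
          testFT (firstMoment θ i) (t • -ξ) * (A ξ * testFT φ ξ) := by
        simp only [poincareMultiplier, rayMean, intervalIntegral.integral_of_le zero_le_one,
          integral_mul_const, mul_assoc]
    _ = ∫ t in Set.Ioc (0 : ℝ) 1, ∫ ξ,
          testFT (firstMoment θ i) (t • -ξ) * (A ξ * testFT φ ξ) :=
        integral_integral_swap integrable_prod
    _ = 0 := setIntegral_eq_zero_of_forall_eq_zero fun t ht => by
        rw [hA.integral_testFT_smul_mul_testFT (hθ.isTestFunction_firstMoment i) hφ]
        refine integral_eq_zero_of_ae (.of_forall fun a => ?_)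
        by_cases ha : θ a = 0
        · simp [firstMoment, ha]
        · simp [h a ha t (Set.Ioc_subset_Icc_self ht)]

lemma MemHTilde.integral_convolution_mul_testFT_comp_add_eq_zero (hF : MemHTilde s Γ F)
    (hχ : IsTestFunction χ) (hφ : IsTestFunction φ) {v : R2}
    (h : ∀ y ∈ closure Γ, y ∈ tsupport χ → y + v ∉ tsupport φ) :
    ∫ ξ, (F ⋆[.mul ℂ ℂ] multiplierKernel χ) ξ * testFT (fun x => φ (x + v)) ξ = 0 := by
  rw [hF.isSobolevFT.integral_convolution_multiplierKernel hχ (hφ.comp_add_right v)]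
  refine hF.integral_mul_testFT_eq_zero _ ((hφ.comp_add_right v).contDiff_mul hχ.contDiff) ?_
  refine Set.eq_empty_of_forall_notMem fun y ⟨y_mem, hyΓ⟩ => ?_
  exact h y hyΓ (tsupport_mul_subset_left y_mem) (tsupport_comp_subset_preimage φ
    (f := fun x : R2 => x + v) (by fun_prop) (tsupport_mul_subset_right y_mem))

lemma MemHTilde.poincareMultiplier_mul_convolution (hF : MemHTilde s Γ F)
    (hχ : IsTestFunction χ) (hθ : IsTestFunction θ) (hsweep : SweepsWithin Γ χ θ) (i : Fin 2) :
    MemHTilde (s + 1) Γ fun ξ =>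
      poincareMultiplier θ i ξ * (F ⋆[.mul ℂ ℂ] multiplierKernel χ) ξ := by
  have localized := (hF.isSobolevFT.convolution_and_energy_le hχ.rapidDecay_multiplierKernel).1
  refine ⟨hθ.isSobolevFT_poincareMultiplier_mul localized i, fun φ hφ hφΓ => ?_⟩
  refine localized.integral_poincareMultiplier_mul_eq_zero hθ hφ i fun a ha t ht => ?_
  exact hF.integral_convolution_mul_testFT_comp_add_eq_zero hχ hφ fun y hy hyχ hyφ =>
    Set.eq_empty_iff_forall_notMem.1 hφΓ _ ⟨hyφ, hsweep y hy hyχ a ha t ht⟩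

end PoincareMultiplier

section RegularDecomposition

open scoped Convolution

variable {s : ℝ} {Γ : Set R2} {F₁ F₂ G₁ G₂ q A₁ A₂ θ χ κ : R2 → ℂ}

/-- `(F₁, F₂)` is the Fourier transform of a vector field which lies in `H^s` together with its
divergence. -/
structure IsDivFieldFT (s : ℝ) (F₁ F₂ : R2 → ℂ) : Prop where
  fst : IsSobolevFT s F₁
  snd : IsSobolevFT s F₂
  dot : IsSobolevFT s (dotFt F₁ F₂)

/-- Up to the factor `(2π)^{-2}`, the squared graph norm `‖V‖² + ‖div V‖²` in `H^s` of the vector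
field with Fourier transform `(F₁, F₂)`. -/
def fieldEnergy (s : ℝ) (F₁ F₂ : R2 → ℂ) : ℝ :=
  sobolevEnergy s F₁ + sobolevEnergy s F₂ + sobolevEnergy s (dotFt F₁ F₂)

lemma fieldEnergy_nonneg (s : ℝ) (F₁ F₂ : R2 → ℂ) : 0 ≤ fieldEnergy s F₁ F₂ :=
  add_nonneg (add_nonneg (sobolevEnergy_nonneg _ _) (sobolevEnergy_nonneg _ _))
    (sobolevEnergy_nonneg _ _)

lemma sobolevEnergy_add_le_fieldEnergy (s : ℝ) (F₁ F₂ : R2 → ℂ) :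
    sobolevEnergy s F₁ + sobolevEnergy s F₂ ≤ fieldEnergy s F₁ F₂ :=
  le_add_of_nonneg_right (sobolevEnergy_nonneg s _)

lemma dotFt_sub (ξ : R2) : dotFt (fun η => F₁ η - G₁ η) (fun η => F₂ η - G₂ η) ξ =
    dotFt F₁ F₂ ξ - dotFt G₁ G₂ ξ := by
  simp only [dotFt]
  ring

lemma IsDivFieldFT.sub_and_energy_le (hF : IsDivFieldFT s F₁ F₂) (hG : IsDivFieldFT s G₁ G₂) :
    IsDivFieldFT s (fun ξ => F₁ ξ - G₁ ξ) (fun ξ => F₂ ξ - G₂ ξ) ∧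
      fieldEnergy s (fun ξ => F₁ ξ - G₁ ξ) (fun ξ => F₂ ξ - G₂ ξ) ≤
        2 * (fieldEnergy s F₁ F₂ + fieldEnergy s G₁ G₂) := by
  obtain ⟨fst, fst_le⟩ := hF.fst.sub_and_energy_le hG.fst
  obtain ⟨snd, snd_le⟩ := hF.snd.sub_and_energy_le hG.snd
  obtain ⟨dot, dot_le⟩ := hF.dot.sub_and_energy_le hG.dot
  simp only [← dotFt_sub] at dot dot_le
  refine ⟨⟨fst, snd, dot⟩, ?_⟩
  simp only [fieldEnergy]
  linarith

lemma RapidDecay.coord_mul (hκ : RapidDecay κ) (i : Fin 2) :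
    RapidDecay fun ξ : R2 => (ξ i : ℂ) * κ ξ :=
  hκ.mul_of_norm_le (A := 1) (t := 1 / 2) (by fun_prop) fun ξ => by
    rw [one_mul, norm_real]
    exact (PiLp.norm_apply_le ξ i).trans (norm_le_sobolevWeight_half ξ)

lemma IsDivFieldFT.dotFt_convolution (hF : IsDivFieldFT s F₁ F₂) (hκ : RapidDecay κ) :
    dotFt (F₁ ⋆[.mul ℂ ℂ] κ) (F₂ ⋆[.mul ℂ ℂ] κ) = fun ξ => (dotFt F₁ F₂ ⋆[.mul ℂ ℂ] κ) ξ +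
      ((F₁ ⋆[.mul ℂ ℂ] fun ζ => (ζ 0 : ℂ) * κ ζ) ξ +
        (F₂ ⋆[.mul ℂ ℂ] fun ζ => (ζ 1 : ℂ) * κ ζ) ξ) := by
  ext ξ
  have integrable {F κ : R2 → ℂ} (hF : IsSobolevFT s F) (hκ : RapidDecay κ) :
      Integrable fun η => F η * κ (ξ - η) :=
    hF.integrable_mul (hκ.comp_sub_left_and_energy_le (-s) ξ).1
  have integrable₁ := integrable hF.fst (hκ.coord_mul 0)
  have integrable₂ := integrable hF.snd (hκ.coord_mul 1)
  have integrable_moments := integrable₁.add integrable₂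
  simp only [Pi.add_def] at integrable_moments
  simp only [dotFt.eq_1 (F₁ ⋆[.mul ℂ ℂ] κ), convolution_mul]
  rw [← integral_add integrable₁ integrable₂,
    ← integral_add (integrable hF.dot hκ) integrable_moments,
    ← integral_const_mul, ← integral_const_mul,
    ← integral_add ((integrable hF.fst hκ).const_mul _) ((integrable hF.snd hκ).const_mul _)]
  congr 1 with η
  simp only [dotFt, PiLp.sub_apply, ofReal_sub]
  ring

lemma exists_fieldEnergy_convolution_le (s : ℝ) (hκ : RapidDecay κ) :
    ∃ C, 0 ≤ C ∧ ∀ F₁ F₂, IsDivFieldFT s F₁ F₂ →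
      IsDivFieldFT s (F₁ ⋆[.mul ℂ ℂ] κ) (F₂ ⋆[.mul ℂ ℂ] κ) ∧
        fieldEnergy s (F₁ ⋆[.mul ℂ ℂ] κ) (F₂ ⋆[.mul ℂ ℂ] κ) ≤ C * fieldEnergy s F₁ F₂ := by
  have young (κ : R2 → ℂ) (hκ : RapidDecay κ) : ∃ C, 0 ≤ C ∧ ∀ F, IsSobolevFT s F →
      IsSobolevFT s (F ⋆[.mul ℂ ℂ] κ) ∧
        sobolevEnergy s (F ⋆[.mul ℂ ℂ] κ) ≤ C * sobolevEnergy s F :=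
    ⟨_, mul_nonneg (mul_nonneg (by positivity) (integral_nonneg fun _ => norm_nonneg _))
      (integral_nonneg fun ξ => mul_nonneg (sobolevWeight_pos |s| ξ).le (norm_nonneg _)),
      fun F hF => hF.convolution_and_energy_le hκ⟩
  obtain ⟨C, hC, bound⟩ := young κ hκ
  obtain ⟨C₀, hC₀, bound₀⟩ := young _ (hκ.coord_mul 0)
  obtain ⟨C₁, hC₁, bound₁⟩ := young _ (hκ.coord_mul 1)
  refine ⟨2 * C + 4 * C₀ + 4 * C₁, by positivity, fun F₁ F₂ hF => ?_⟩
  obtain ⟨fst, fst_le⟩ := bound F₁ hF.fst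
  obtain ⟨snd, snd_le⟩ := bound F₂ hF.snd
  obtain ⟨dot, dot_le⟩ := bound _ hF.dot
  obtain ⟨moment₀, moment₀_le⟩ := bound₀ F₁ hF.fst
  obtain ⟨moment₁, moment₁_le⟩ := bound₁ F₂ hF.snd
  obtain ⟨moments, moments_le⟩ := moment₀.add_and_energy_le moment₁
  obtain ⟨total, total_le⟩ := dot.add_and_energy_le moments
  rw [← hF.dotFt_convolution hκ] at total total_le
  refine ⟨⟨fst, snd, total⟩, ?_⟩
  simp only [fieldEnergy]
  have fst_nonneg := sobolevEnergy_nonneg s F₁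
  have snd_nonneg := sobolevEnergy_nonneg s F₂
  have dot_nonneg := sobolevEnergy_nonneg s (dotFt F₁ F₂)
  nlinarith [mul_nonneg hC fst_nonneg, mul_nonneg hC snd_nonneg, mul_nonneg hC₀ snd_nonneg,
    mul_nonneg hC₀ dot_nonneg, mul_nonneg hC₁ fst_nonneg, mul_nonneg hC₁ dot_nonneg]

lemma norm_curlFt_le (F₁ F₂ : R2 → ℂ) (ξ : R2) :
    ‖curlFt F₁ F₂ ξ‖ ≤ ‖ξ‖ * (‖F₁ ξ‖ + ‖F₂ ξ‖) := by
  have coord_le (i : Fin 2) (z : ℂ) : ‖(ξ i : ℂ) * z‖ ≤ ‖ξ‖ * ‖z‖ := by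
    rw [norm_mul, norm_real]
    exact mul_le_mul_of_nonneg_right (PiLp.norm_apply_le ξ i) (norm_nonneg z)
  calc ‖curlFt F₁ F₂ ξ‖ ≤ ‖(ξ 1 : ℂ) * F₁ ξ‖ + ‖(ξ 0 : ℂ) * F₂ ξ‖ := norm_sub_le _ _
    _ ≤ ‖ξ‖ * (‖F₁ ξ‖ + ‖F₂ ξ‖) := by linarith [coord_le 1 (F₁ ξ), coord_le 0 (F₂ ξ)]

/-- Up to a factor `i`, the Fourier transform of `curl (V - curl⃗ q)`. -/
def curlRemainder (q F₁ F₂ : R2 → ℂ) (ξ : R2) : ℂ :=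
  curlFt F₁ F₂ ξ - I * ((‖ξ‖ ^ 2 : ℝ) : ℂ) * q ξ

/-- The potential obtained by integrating a field along rays and averaging over their directions
with density `θ`. Subtracting its rotated gradient leaves a field whose curl is no rougher than the
field itself and its divergence. -/
def poincarePotential (θ A₁ A₂ : R2 → ℂ) (ξ : R2) : ℂ :=
  poincareMultiplier θ 1 ξ * A₁ ξ - poincareMultiplier θ 0 ξ * A₂ ξ

lemma IsTestFunction.poincarePotential_energy_le (hθ : IsTestFunction θ) (s : ℝ) :
    ∃ C, 0 ≤ C ∧ ∀ A₁ A₂, IsSobolevFT s A₁ → IsSobolevFT s A₂ →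
      sobolevEnergy (s + 1) (poincarePotential θ A₁ A₂) ≤
        C * (sobolevEnergy s A₁ + sobolevEnergy s A₂) := by
  obtain ⟨C, hC⟩ := hθ.exists_norm_poincareMultiplier_le
  refine ⟨2 * C ^ 2, by positivity, fun A₁ A₂ hA₁ hA₂ => ?_⟩
  obtain ⟨mem₁, le₁⟩ := hA₁.mul_of_norm_le (hθ.continuous_poincareMultiplier 1) (hC 1)
  obtain ⟨mem₂, le₂⟩ := hA₂.mul_of_norm_le (hθ.continuous_poincareMultiplier 0) (hC 0)
  rw [show s + 1 = s - 2 * -(1 / 2) by ring]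
  calc sobolevEnergy (s - 2 * -(1 / 2)) (poincarePotential θ A₁ A₂) ≤ _ :=
        (mem₁.sub_and_energy_le mem₂).2
    _ ≤ 2 * C ^ 2 * (sobolevEnergy s A₁ + sobolevEnergy s A₂) := by linarith

lemma IsTestFunction.curlRemainder_poincarePotential (hθ : IsTestFunction θ)
    (hθ_mean : testFT θ 0 = 1) (A₁ A₂ : R2 → ℂ) (ξ : R2) :
    curlRemainder (poincarePotential θ A₁ A₂) A₁ A₂ ξ = testFT θ (-ξ) * curlFt A₁ A₂ ξ +
      I * dotFt A₁ A₂ ξ * curlFt (poincareMultiplier θ 0) (poincareMultiplier θ 1) ξ := by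
  have hdot := hθ.dotFt_poincareMultiplier ξ
  have testFT_eq : testFT θ (-ξ) = 1 - I * dotFt (poincareMultiplier θ 0)
      (poincareMultiplier θ 1) ξ := by linear_combination hθ_mean + hdot
  rw [testFT_eq, curlRemainder, EuclideanSpace.real_norm_sq_eq, Fin.sum_univ_two]
  simp only [curlFt, dotFt, poincarePotential]
  push_cast
  ring

lemma IsTestFunction.exists_norm_curlRemainder_le (hθ : IsTestFunction θ)
    (hθ_mean : testFT θ 0 = 1) : ∃ C, ∀ A₁ A₂ ξ,
      ‖curlRemainder (poincarePotential θ A₁ A₂) A₁ A₂ ξ‖ ≤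
        C * (‖A₁ ξ‖ + ‖A₂ ξ‖ + ‖dotFt A₁ A₂ ξ‖) := by
  obtain ⟨C, hC⟩ := hθ.exists_norm_poincareMultiplier_le
  obtain ⟨D, hD⟩ := hθ.rapidDecay_testFT.decay (-(1 / 2))
  have norm_mul_le {B b : ℝ} {ξ : R2} (hb : b ≤ B * sobolevWeight (-(1 / 2)) ξ) :
      b * ‖ξ‖ ≤ |B| := by
    calc b * ‖ξ‖ ≤ |B| * sobolevWeight (-(1 / 2)) ξ * sobolevWeight (1 / 2) ξ := by
          refine mul_le_mul (hb.trans ?_) (norm_le_sobolevWeight_half ξ) (norm_nonneg ξ) ?_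
          · exact mul_le_mul_of_nonneg_right (le_abs_self B) (sobolevWeight_pos _ ξ).le
          · exact mul_nonneg (abs_nonneg B) (sobolevWeight_pos _ ξ).le
      _ = |B| := by rw [mul_assoc, sobolevWeight_neg_mul_cancel, mul_one]
  refine ⟨|D| + 2 * |C|, fun A₁ A₂ ξ => ?_⟩
  have smoothing_le := norm_mul_le (sobolevWeight_neg (-(1 / 2)) ξ ▸ hD (-ξ))
  have multiplier_le (i) := norm_mul_le (hC i ξ)
  rw [hθ.curlRemainder_poincarePotential hθ_mean]
  calc _ ≤ ‖testFT θ (-ξ)‖ * ‖curlFt A₁ A₂ ξ‖ + ‖dotFt A₁ A₂ ξ‖ *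
          ‖curlFt (poincareMultiplier θ 0) (poincareMultiplier θ 1) ξ‖ := by
        refine (norm_add_le _ _).trans_eq ?_
        rw [norm_mul, norm_mul, norm_mul, norm_I, one_mul]
    _ ≤ ‖testFT θ (-ξ)‖ * (‖ξ‖ * (‖A₁ ξ‖ + ‖A₂ ξ‖)) + ‖dotFt A₁ A₂ ξ‖ *
          (‖ξ‖ * (‖poincareMultiplier θ 0 ξ‖ + ‖poincareMultiplier θ 1 ξ‖)) := by
        gcongr <;> exact norm_curlFt_le _ _ ξ
    _ = ‖testFT θ (-ξ)‖ * ‖ξ‖ * (‖A₁ ξ‖ + ‖A₂ ξ‖) + (‖poincareMultiplier θ 0 ξ‖ * ‖ξ‖ +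
          ‖poincareMultiplier θ 1 ξ‖ * ‖ξ‖) * ‖dotFt A₁ A₂ ξ‖ := by ring
    _ ≤ |D| * (‖A₁ ξ‖ + ‖A₂ ξ‖) + (|C| + |C|) * ‖dotFt A₁ A₂ ξ‖ := by
        gcongr
        exacts [multiplier_le 0, multiplier_le 1]
    _ ≤ (|D| + 2 * |C|) * (‖A₁ ξ‖ + ‖A₂ ξ‖ + ‖dotFt A₁ A₂ ξ‖) := by
        have : 0 ≤ |D| * ‖dotFt A₁ A₂ ξ‖ + 2 * |C| * (‖A₁ ξ‖ + ‖A₂ ξ‖) := by positivity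
        linarith

lemma curlRemainder_sum {ι : Type*} (t : Finset ι) (q F₁ F₂ : ι → R2 → ℂ) (ξ : R2) :
    curlRemainder (fun η => ∑ j ∈ t, q j η) (fun η => ∑ j ∈ t, F₁ j η)
        (fun η => ∑ j ∈ t, F₂ j η) ξ = ∑ j ∈ t, curlRemainder (q j) (F₁ j) (F₂ j) ξ := by
  simp only [curlRemainder, curlFt, Finset.mul_sum, Finset.sum_sub_distrib]

/-- `q ∈ H̃^{s+1}(Γ)` is such that `curl (V - curl⃗ q) ∈ H^s`, where `V` has Fourier transform
`(F₁, F₂)`, and both have energy at most `N`. -/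
structure IsRegularPotential (s : ℝ) (Γ : Set R2) (N : ℝ) (q F₁ F₂ : R2 → ℂ) : Prop where
  memHTilde : MemHTilde (s + 1) Γ q
  energy_le : sobolevEnergy (s + 1) q ≤ N
  isSobolevFT_curlRemainder : IsSobolevFT s (curlRemainder q F₁ F₂)
  energy_curlRemainder_le : sobolevEnergy s (curlRemainder q F₁ F₂) ≤ N

lemma IsRegularPotential.mono {N N' : ℝ} (hq : IsRegularPotential s Γ N q F₁ F₂) (hN : N ≤ N') :
    IsRegularPotential s Γ N' q F₁ F₂ :=
  { hq with
    energy_le := hq.energy_le.trans hN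
    energy_curlRemainder_le := hq.energy_curlRemainder_le.trans hN }

lemma IsRegularPotential.sum {ι : Type*} (t : Finset ι) {N : ι → ℝ} {q F₁ F₂ : ι → R2 → ℂ}
    (hq : ∀ j ∈ t, IsRegularPotential s Γ (N j) (q j) (F₁ j) (F₂ j)) :
    IsRegularPotential s Γ (t.card * ∑ j ∈ t, N j) (fun η => ∑ j ∈ t, q j η)
      (fun η => ∑ j ∈ t, F₁ j η) (fun η => ∑ j ∈ t, F₂ j η) := by
  obtain ⟨-, energy_le⟩ := IsSobolevFT.sum_and_energy_le t
    fun j hj => (hq j hj).memHTilde.isSobolevFT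
  obtain ⟨remainder, remainder_le⟩ := IsSobolevFT.sum_and_energy_le t
    fun j hj => (hq j hj).isSobolevFT_curlRemainder
  simp only [← curlRemainder_sum] at remainder remainder_le
  refine ⟨.sum t fun j hj => (hq j hj).memHTilde, energy_le.trans ?_, remainder,
    remainder_le.trans ?_⟩ <;> gcongr with j hj
  exacts [(hq j hj).energy_le, (hq j hj).energy_curlRemainder_le]

lemma IsTestFunction.exists_curlRemainder_energy_le (hθ : IsTestFunction θ)
    (hθ_mean : testFT θ 0 = 1) (s : ℝ) : ∃ C, 0 ≤ C ∧ ∀ A₁ A₂, IsDivFieldFT s A₁ A₂ →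
      IsSobolevFT s (curlRemainder (poincarePotential θ A₁ A₂) A₁ A₂) ∧
        sobolevEnergy s (curlRemainder (poincarePotential θ A₁ A₂) A₁ A₂) ≤
          C * fieldEnergy s A₁ A₂ := by
  obtain ⟨C, bound⟩ := hθ.exists_norm_curlRemainder_le hθ_mean
  refine ⟨3 * C ^ 2, by positivity, fun A₁ A₂ hA => ?_⟩
  have continuous_remainder : Continuous (curlRemainder (poincarePotential θ A₁ A₂) A₁ A₂) := by
    have := hθ.continuous_poincareMultiplier
    have := hA.fst.continuous
    have := hA.snd.continuous
    unfold curlRemainder curlFt poincarePotential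
    fun_prop
  have integrable_sum := (hA.fst.integrable.add hA.snd.integrable).add hA.dot.integrable
  have energy_eq : 3 * C ^ 2 * fieldEnergy s A₁ A₂ = ∫ ξ, 3 * C ^ 2 *
      (sobolevWeight s ξ * ‖A₁ ξ‖ ^ 2 + sobolevWeight s ξ * ‖A₂ ξ‖ ^ 2 +
        sobolevWeight s ξ * ‖dotFt A₁ A₂ ξ‖ ^ 2) := by
    rw [integral_const_mul, fieldEnergy, sobolevEnergy, sobolevEnergy, sobolevEnergy,
      ← integral_add hA.fst.integrable hA.snd.integrable]
    exact congrArg _ (integral_add (hA.fst.integrable.add hA.snd.integrable)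
      hA.dot.integrable).symm
  rw [energy_eq]
  refine IsSobolevFT.of_le continuous_remainder (integrable_sum.const_mul _) fun ξ => ?_
  have sq_le : ‖curlRemainder (poincarePotential θ A₁ A₂) A₁ A₂ ξ‖ ^ 2 ≤
      C ^ 2 * (3 * (‖A₁ ξ‖ ^ 2 + ‖A₂ ξ‖ ^ 2 + ‖dotFt A₁ A₂ ξ‖ ^ 2)) := by
    refine (pow_le_pow_left₀ (norm_nonneg _) (bound A₁ A₂ ξ) 2).trans ?_
    rw [mul_pow]
    gcongr
    nlinarith [sq_nonneg (‖A₁ ξ‖ - ‖A₂ ξ‖), sq_nonneg (‖A₂ ξ‖ - ‖dotFt A₁ A₂ ξ‖),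
      sq_nonneg (‖A₁ ξ‖ - ‖dotFt A₁ A₂ ξ‖)]
  calc _ ≤ sobolevWeight s ξ * _ := mul_le_mul_of_nonneg_left sq_le (sobolevWeight_pos s ξ).le
    _ = _ := by ring

lemma SweepsWithin.exists_isRegularPotential (hsweep : SweepsWithin Γ χ θ)
    (hχ : IsTestFunction χ) (hθ : IsTestFunction θ) (hθ_mean : testFT θ 0 = 1) (s : ℝ) :
    ∃ C, 0 ≤ C ∧ ∀ F₁ F₂, MemHTilde s Γ F₁ → MemHTilde s Γ F₂ → IsSobolevFT s (dotFt F₁ F₂) →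
      ∃ q, IsRegularPotential s Γ (C * fieldEnergy s F₁ F₂) q (F₁ ⋆[.mul ℂ ℂ] multiplierKernel χ)
        (F₂ ⋆[.mul ℂ ℂ] multiplierKernel χ) := by
  obtain ⟨C₀, hC₀, convolution_le⟩ :=
    exists_fieldEnergy_convolution_le s hχ.rapidDecay_multiplierKernel
  obtain ⟨C₁, hC₁, potential_le⟩ := hθ.poincarePotential_energy_le s
  obtain ⟨C₂, hC₂, remainder_le⟩ := hθ.exists_curlRemainder_energy_le hθ_mean s
  refine ⟨(C₁ + C₂) * C₀, by positivity, fun F₁ F₂ hF₁ hF₂ hdot => ?_⟩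
  obtain ⟨localized, localized_le⟩ :=
    convolution_le F₁ F₂ ⟨hF₁.isSobolevFT, hF₂.isSobolevFT, hdot⟩
  obtain ⟨remainder, remainder_le⟩ := remainder_le _ _ localized
  refine ⟨_, (hF₁.poincareMultiplier_mul_convolution hχ hθ hsweep 1).sub
    (hF₂.poincareMultiplier_mul_convolution hχ hθ hsweep 0), ?_, remainder, ?_⟩
  · calc _ ≤ C₁ * _ := potential_le _ _ localized.fst localized.snd
      _ ≤ C₁ * (C₀ * fieldEnergy s F₁ F₂) :=
        mul_le_mul_of_nonneg_left ((sobolevEnergy_add_le_fieldEnergy s _ _).trans localized_le) hC₁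
      _ ≤ (C₁ + C₂) * C₀ * fieldEnergy s F₁ F₂ := by
        rw [← mul_assoc]
        gcongr
        · exact fieldEnergy_nonneg s F₁ F₂
        · exact le_add_of_nonneg_right hC₂
  · calc _ ≤ C₂ * _ := remainder_le
      _ ≤ C₂ * (C₀ * fieldEnergy s F₁ F₂) := mul_le_mul_of_nonneg_left localized_le hC₂
      _ ≤ (C₁ + C₂) * C₀ * fieldEnergy s F₁ F₂ := by
        rw [← mul_assoc]
        gcongr
        · exact fieldEnergy_nonneg s F₁ F₂
        · exact le_add_of_nonneg_left hC₁

lemma IsSobolevFT.convolution_multiplierKernel_sum {F : R2 → ℂ} (hF : IsSobolevFT s F)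
    {ι : Type*} (t : Finset ι) {χ : ι → R2 → ℂ} (hχ : ∀ j ∈ t, IsTestFunction (χ j)) :
    (F ⋆[.mul ℂ ℂ] multiplierKernel fun x => ∑ j ∈ t, χ j x) =
      fun ξ => ∑ j ∈ t, (F ⋆[.mul ℂ ℂ] multiplierKernel (χ j)) ξ := by
  have kernel_sum (ζ : R2) :
      multiplierKernel (fun x => ∑ j ∈ t, χ j x) ζ = ∑ j ∈ t, multiplierKernel (χ j) ζ := by
    simp only [multiplierKernel, testFT_eq_integral_inner, Finset.mul_sum]
    rw [integral_finsetSum t fun j hj => (hχ j hj).integrable_exp_mul (-ζ), Finset.mul_sum]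
  ext ξ
  simp only [convolution_mul, kernel_sum, Finset.mul_sum]
  exact integral_finsetSum t fun j hj => hF.integrable_mul
    ((hχ j hj).rapidDecay_multiplierKernel.comp_sub_left_and_energy_le (-s) ξ).1

theorem HasLocalCones.exists_isRegularPotential (hΓ : HasLocalCones Γ)
    (hb : Bornology.IsBounded Γ) (s : ℝ) :
    ∃ C, 0 ≤ C ∧ ∀ F₁ F₂, MemHTilde s Γ F₁ → MemHTilde s Γ F₂ → IsSobolevFT s (dotFt F₁ F₂) →
      ∃ q, IsRegularPotential s Γ (C * fieldEnergy s F₁ F₂) q F₁ F₂ := by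
  obtain ⟨ι, _, χ, θ, hχ, hθ, hθ_mean, hsweep, hsum⟩ := hΓ.exists_partition hb
  choose C hC localPotential using fun j =>
    (hsweep j).exists_isRegularPotential (hχ j) (hθ j) (hθ_mean j) s
  refine ⟨Fintype.card ι * ∑ j, C j,
    mul_nonneg (Nat.cast_nonneg _) (Finset.sum_nonneg fun j _ => hC j),
    fun F₁ F₂ hF₁ hF₂ hdot => ?_⟩
  choose q hq using fun j => localPotential j F₁ F₂ hF₁ hF₂ hdot
  have partition_eq {F : R2 → ℂ} (hF : MemHTilde s Γ F) :
      (fun ξ => ∑ j, (F ⋆[.mul ℂ ℂ] multiplierKernel (χ j)) ξ) = F := by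
    rw [← hF.isSobolevFT.convolution_multiplierKernel_sum _ fun j _ => hχ j]
    exact hF.convolution_multiplierKernel_eq_self (.sum _ fun j _ => hχ j) hsum
  have potential := IsRegularPotential.sum Finset.univ fun j _ => hq j
  rw [partition_eq hF₁, partition_eq hF₂, ← Finset.sum_mul, ← mul_assoc] at potential
  exact ⟨_, potential⟩

end RegularDecomposition

section CurlPairing

variable {k : ℝ} {q F₁ F₂ G₁ G₂ : R2 → ℂ}

lemma sobolevWeight_neg_half (ξ : R2) : sobolevWeight (-(1 / 2)) ξ = (√(1 + ‖ξ‖ ^ 2))⁻¹ := by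
  rw [sobolevWeight, Real.rpow_neg (by positivity), ← Real.sqrt_eq_rpow]

lemma sobolevWeight_neg_half_mul_norm_le_one (ξ : R2) :
    sobolevWeight (-(1 / 2)) ξ * ‖ξ‖ ≤ 1 :=
  (mul_le_mul_of_nonneg_left (norm_le_sobolevWeight_half ξ) (sobolevWeight_pos _ ξ).le).trans_eq
    (sobolevWeight_neg_mul_cancel _ ξ)

lemma norm_g0hat (hk : 0 ≤ k) (ξ : R2) : ‖g0hat k ξ‖ = (√|‖ξ‖ ^ 2 - k ^ 2|)⁻¹ := by
  unfold g0hat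
  split_ifs with h
  · have : ‖ξ‖ ^ 2 - k ^ 2 < 0 := by nlinarith [norm_nonneg ξ]
    rw [norm_div, norm_I, norm_real, Real.norm_of_nonneg (Real.sqrt_nonneg _),
      abs_of_neg this, neg_sub, one_div]
  · have : 0 ≤ ‖ξ‖ ^ 2 - k ^ 2 := by nlinarith
    rw [norm_div, norm_one, norm_real, Real.norm_of_nonneg (Real.sqrt_nonneg _),
      abs_of_nonneg this, one_div]

lemma measurable_g0hat (k : ℝ) : Measurable (g0hat k) :=
  Measurable.ite (measurableSet_lt (by fun_prop) (by fun_prop)) (by fun_prop) (by fun_prop)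

lemma sobolevWeight_le_re_g0hat (hk : 0 ≤ k) {ξ : R2} (hξ : k < ‖ξ‖) :
    sobolevWeight (-(1 / 2)) ξ ≤ (g0hat k ξ).re := by
  rw [sobolevWeight_neg_half, g0hat, if_neg hξ.not_gt, div_ofReal_re, one_re, one_div]
  have : 0 < ‖ξ‖ ^ 2 - k ^ 2 := by nlinarith
  gcongr
  nlinarith

lemma norm_g0hat_le (hk : 0 ≤ k) {ξ : R2} (hξ : 2 * k + 1 ≤ ‖ξ‖) :
    ‖g0hat k ξ‖ ≤ 2 * sobolevWeight (-(1 / 2)) ξ := by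
  have pos : 0 < ‖ξ‖ ^ 2 - k ^ 2 := by nlinarith
  rw [norm_g0hat hk, abs_of_pos pos, sobolevWeight_neg_half, ← div_eq_mul_inv, inv_eq_one_div,
    div_le_div_iff₀ (Real.sqrt_pos.2 pos) (by positivity), one_mul]
  refine Real.sqrt_le_iff.2 ⟨by positivity, ?_⟩
  rw [mul_pow, Real.sq_sqrt pos.le]
  nlinarith

lemma integrableOn_mul_inv_sqrt_abs_sq_sub_sq (hk : 0 < k) {R : ℝ} (hR : 0 ≤ R) :
    IntegrableOn (fun y : ℝ => y * (√|y ^ 2 - k ^ 2|)⁻¹) (Set.Ioc 0 R) := by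
  have integrable_singularity :
      IntervalIntegrable (fun y : ℝ => |y - k| ^ (-(1 / 2) : ℝ)) volume 0 R := by
    have centered : IntervalIntegrable (fun y : ℝ => |y| ^ (-(1 / 2) : ℝ)) volume
        (0 - k) (R - k) := by
      refine intervalIntegrable_of_even (fun x => by rw [abs_neg]) (fun x hx => ?_)
        enorm_ne_top enorm_ne_top
      refine (intervalIntegral.intervalIntegrable_rpow' (r := -(1 / 2)) (by norm_num)).congr ?_
      intro y hy
      rw [Set.uIoc_of_le hx.le] at hy
      simp only [abs_of_pos hy.1]
    simpa only [sub_add_cancel] using centered.comp_sub_right k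
  rw [intervalIntegrable_iff_integrableOn_Ioc_of_le hR] at integrable_singularity
  refine (integrable_singularity.const_mul (R * k ^ (-(1 / 2) : ℝ))).mono'
    (Measurable.aestronglyMeasurable (by fun_prop))
    ((ae_restrict_iff' measurableSet_Ioc).2 (ae_of_all _ fun y hy => ?_))
  rw [norm_mul, Real.norm_of_nonneg hy.1.le, Real.norm_of_nonneg (by positivity), mul_assoc,
    ← Real.mul_rpow hk.le (abs_nonneg _), Real.rpow_neg (by positivity), ← Real.sqrt_eq_rpow]
  refine mul_le_mul hy.2 ?_ (by positivity) hR
  rcases eq_or_ne y k with rfl | hne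
  · simp only [sub_self, abs_zero, mul_zero, le_refl]
  have : 0 < |y - k| := abs_pos.2 (sub_ne_zero.2 hne)
  have factor : |y ^ 2 - k ^ 2| = (y + k) * |y - k| := by
    rw [sq_sub_sq, abs_mul, abs_of_pos (by linarith [hy.1])]
  rw [factor]
  gcongr
  linarith [hy.1]

lemma integrableOn_g0hat (hk : 0 < k) (R : ℝ) :
    IntegrableOn (g0hat k) (Metric.closedBall 0 R) := by
  have profile := (integrableOn_mul_inv_sqrt_abs_sq_sub_sq hk
    (by positivity : 0 ≤ |R| + 1)).mono_set Set.Ioo_subset_Ioc_self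
  have radial := (integrableOn_fun_norm_addHaar (volume : Measure R2)
    (f := fun y => (√|y ^ 2 - k ^ 2|)⁻¹) (r := |R| + 1)).2 <| by
      simpa only [finrank_euclideanSpace, Fintype.card_fin, Nat.add_one_sub_one, pow_one,
        smul_eq_mul] using profile
  simp only [← norm_g0hat hk.le] at radial
  rw [IntegrableOn, integrable_norm_iff (measurable_g0hat k).aestronglyMeasurable] at radial
  exact IntegrableOn.mono_set radial
    (Metric.closedBall_subset_ball (by linarith [le_abs_self R]))

lemma norm_dotFt_sq_add_norm_curlFt_sq (F₁ F₂ : R2 → ℂ) (ξ : R2) :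
    ‖dotFt F₁ F₂ ξ‖ ^ 2 + ‖curlFt F₁ F₂ ξ‖ ^ 2 = ‖ξ‖ ^ 2 * (‖F₁ ξ‖ ^ 2 + ‖F₂ ξ‖ ^ 2) := by
  simp only [EuclideanSpace.real_norm_sq_eq, Fin.sum_univ_two, Complex.sq_norm, normSq_apply,
    dotFt, curlFt, add_re, add_im, sub_re, sub_im, re_ofReal_mul, im_ofReal_mul]
  ring

/-- The integrand of `E(q, V)`, up to the factor `-k²`, for `V` with Fourier transform
`(F₁, F₂)`. -/
def curlPairing (k : ℝ) (q F₁ F₂ : R2 → ℂ) (ξ : R2) : ℂ :=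
  I * g0hat k ξ * q ξ * starRingEnd ℂ (curlFt F₁ F₂ ξ)

lemma Bintegrand_rotGrad (k : ℝ) (q F₁ F₂ : R2 → ℂ) (ξ : R2) :
    Bintegrand k (fun η => I * (η 1 : ℂ) * q η) (fun η => -(I * (η 0 : ℂ) * q η)) F₁ F₂ ξ =
      -((k ^ 2 : ℝ) : ℂ) * curlPairing k q F₁ F₂ ξ := by
  have dot_eq : dotFt (fun η => I * (η 1 : ℂ) * q η) (fun η => -(I * (η 0 : ℂ) * q η)) ξ = 0 := by
    simp only [dotFt]
    ring
  have curl_eq : curlFt (fun η => I * (η 1 : ℂ) * q η) (fun η => -(I * (η 0 : ℂ) * q η)) ξ =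
      I * ((‖ξ‖ ^ 2 : ℝ) : ℂ) * q ξ := by
    simp only [curlFt, EuclideanSpace.real_norm_sq_eq, Fin.sum_univ_two]
    push_cast
    ring
  rw [Bintegrand, curlPairing, dot_eq, curl_eq]
  rcases eq_or_ne ξ 0 with rfl | hξ
  · simp [curlFt]
  · have : ((‖ξ‖ ^ 2 : ℝ) : ℂ) ≠ 0 := ofReal_ne_zero.2 (by positivity)
    field_simp
    ring

lemma integrable_curlPairing (hk : 0 < k) (hq : IsSobolevFT (1 / 2) q)
    (hF₁ : IsSobolevFT (-(1 / 2)) F₁) (hF₂ : IsSobolevFT (-(1 / 2)) F₂) :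
    Integrable (curlPairing k q F₁ F₂) := by
  have continuous_mul : Continuous fun ξ => q ξ * starRingEnd ℂ (curlFt F₁ F₂ ξ) := by
    have := hq.continuous
    have := hF₁.continuous
    have := hF₂.continuous
    have := continuous_conj
    unfold curlFt
    fun_prop
  have curlPairing_eq : curlPairing k q F₁ F₂ =
      fun ξ => I * (g0hat k ξ * (q ξ * starRingEnd ℂ (curlFt F₁ F₂ ξ))) := by
    ext ξ
    simp only [curlPairing]
    ring
  rw [curlPairing_eq]
  refine Integrable.const_mul ?_ I
  rw [← integrableOn_univ, ← Set.union_compl_self (Metric.closedBall (0 : R2) (2 * k + 1))]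
  refine ((integrableOn_g0hat hk _).mul_continuousOn continuous_mul.continuousOn
    (isCompact_closedBall _ _)).union ?_
  refine Integrable.mono' (((hq.integrable_mul hF₁).norm.add
      (hq.integrable_mul hF₂).norm).const_mul 2).integrableOn
    ((measurable_g0hat k).mul continuous_mul.measurable).aestronglyMeasurable
    ((ae_restrict_iff' measurableSet_closedBall.compl).2 (ae_of_all _ fun ξ hξ => ?_))
  rw [Set.mem_compl_iff, mem_closedBall_zero_iff, not_le] at hξ
  have weight_pos := sobolevWeight_pos (-(1 / 2)) ξ
  calc ‖g0hat k ξ * (q ξ * starRingEnd ℂ (curlFt F₁ F₂ ξ))‖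
      = ‖g0hat k ξ‖ * (‖q ξ‖ * ‖curlFt F₁ F₂ ξ‖) := by rw [norm_mul, norm_mul, RCLike.norm_conj]
    _ ≤ 2 * sobolevWeight (-(1 / 2)) ξ * (‖q ξ‖ * (‖ξ‖ * (‖F₁ ξ‖ + ‖F₂ ξ‖))) := by
        gcongr
        exacts [norm_g0hat_le hk.le hξ.le, norm_curlFt_le F₁ F₂ ξ]
    _ = sobolevWeight (-(1 / 2)) ξ * ‖ξ‖ * (2 * (‖q ξ‖ * (‖F₁ ξ‖ + ‖F₂ ξ‖))) := by ring
    _ ≤ 1 * (2 * (‖q ξ‖ * (‖F₁ ξ‖ + ‖F₂ ξ‖))) := by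
        gcongr
        exact sobolevWeight_neg_half_mul_norm_le_one ξ
    _ = 2 * (‖q ξ * F₁ ξ‖ + ‖q ξ * F₂ ξ‖) := by rw [norm_mul, norm_mul]; ring

end CurlPairing

section KernelField

variable {k R : ℝ} {Γ : Set R2} {q F₁ F₂ G₁ G₂ : R2 → ℂ}

/-- `(F₁, F₂)` is the Fourier transform of a vector field `V ∈ X` with `E(q, V) = 0` for all
`q ∈ H̃^{1/2}(Γ)`. -/
structure IsKernelField (k : ℝ) (Γ : Set R2) (F₁ F₂ : R2 → ℂ) : Prop where
  fst : MemHTilde (-(1 / 2)) Γ F₁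
  snd : MemHTilde (-(1 / 2)) Γ F₂
  dot : IsSobolevFT (-(1 / 2)) (dotFt F₁ F₂)
  integral_eq_zero : ∀ q, MemHTilde (1 / 2) Γ q → ∫ ξ, curlPairing k q F₁ F₂ ξ = 0

lemma IsKernelField.isDivFieldFT (hF : IsKernelField k Γ F₁ F₂) :
    IsDivFieldFT (-(1 / 2)) F₁ F₂ :=
  ⟨hF.fst.isSobolevFT, hF.snd.isSobolevFT, hF.dot⟩

lemma IsKernelField.sub (hk : 0 < k) (hF : IsKernelField k Γ F₁ F₂)
    (hG : IsKernelField k Γ G₁ G₂) :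
    IsKernelField k Γ (fun ξ => F₁ ξ - G₁ ξ) (fun ξ => F₂ ξ - G₂ ξ) := by
  refine ⟨hF.fst.sub hG.fst, hF.snd.sub hG.snd,
    (hF.isDivFieldFT.sub_and_energy_le hG.isDivFieldFT).1.dot, fun q hq => ?_⟩
  have integrable {F₁ F₂} (hF : IsKernelField k Γ F₁ F₂) : Integrable (curlPairing k q F₁ F₂) :=
    integrable_curlPairing hk hq.isSobolevFT hF.fst.isSobolevFT hF.snd.isSobolevFT
  have pairing_sub (ξ : R2) : curlPairing k q (fun η => F₁ η - G₁ η) (fun η => F₂ η - G₂ η) ξ =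
      curlPairing k q F₁ F₂ ξ - curlPairing k q G₁ G₂ ξ := by
    simp only [curlPairing, curlFt, map_sub, map_mul]
    ring
  simp only [pairing_sub]
  rw [integral_sub (integrable hF) (integrable hG), hF.integral_eq_zero q hq,
    hG.integral_eq_zero q hq, sub_zero]

lemma isKernelField_of_Eform_eq_zero (hk : k ≠ 0) (V : Xelt Γ)
    (hE : ∀ q : HTildeElt (1 / 2) Γ, Eform k q V = 0) :
    IsKernelField k Γ V.c1.ft V.c2.ft := by
  have continuous_dot : Continuous (dotFt V.c1.ft V.c2.ft) := by
    have := V.c1.cont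
    have := V.c2.cont
    unfold dotFt
    fun_prop
  refine ⟨V.c1.memHTilde, V.c2.memHTilde, ⟨continuous_dot, V.divMem⟩, fun q hq => ?_⟩
  have form_eq_zero : ∫ ξ, -((k ^ 2 : ℝ) : ℂ) * curlPairing k q V.c1.ft V.c2.ft ξ = 0 := by
    simp only [← Bintegrand_rotGrad]
    exact hE hq.toHTildeElt
  rw [integral_const_mul] at form_eq_zero
  exact (mul_eq_zero.1 form_eq_zero).resolve_left
    (neg_ne_zero.2 (ofReal_ne_zero.2 (pow_ne_zero 2 hk)))

lemma norm_sq_mul_curlPairing (k : ℝ) (q F₁ F₂ : R2 → ℂ) (ξ : R2) :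
    ((‖ξ‖ ^ 2 : ℝ) : ℂ) * curlPairing k q F₁ F₂ ξ =
      g0hat k ξ * ((‖curlFt F₁ F₂ ξ‖ ^ 2 : ℝ) : ℂ) -
        g0hat k ξ * curlRemainder q F₁ F₂ ξ * starRingEnd ℂ (curlFt F₁ F₂ ξ) := by
  rw [← normSq_eq_norm_sq (curlFt F₁ F₂ ξ), ← mul_conj, curlPairing, curlRemainder]
  ring

lemma sobolevWeight_mul_norm_curlFt_sq_le (hk : 0 ≤ k) (q F₁ F₂ : R2 → ℂ) {ξ : R2}
    (hξ : k < ‖ξ‖) : sobolevWeight (-(1 / 2)) ξ * ‖curlFt F₁ F₂ ξ‖ ^ 2 ≤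
      ‖ξ‖ ^ 2 * (curlPairing k q F₁ F₂ ξ).re +
        ‖g0hat k ξ‖ * ‖curlRemainder q F₁ F₂ ξ‖ * ‖curlFt F₁ F₂ ξ‖ := by
  have re_eq := congrArg re (norm_sq_mul_curlPairing k q F₁ F₂ ξ)
  rw [re_ofReal_mul, sub_re, re_mul_ofReal] at re_eq
  have error_le := re_le_norm
    (g0hat k ξ * curlRemainder q F₁ F₂ ξ * starRingEnd ℂ (curlFt F₁ F₂ ξ))
  rw [norm_mul, norm_mul, RCLike.norm_conj] at error_le
  have coercive := mul_le_mul_of_nonneg_right (sobolevWeight_le_re_g0hat hk hξ)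
    (sq_nonneg ‖curlFt F₁ F₂ ξ‖)
  linarith

lemma sobolevWeight_mul_norm_sq_le_of_high_frequency (hk : 0 ≤ k) (q F₁ F₂ : R2 → ℂ) {ξ : R2}
    (hξ : 2 * k + 1 ≤ ‖ξ‖) :
    sobolevWeight (-(1 / 2)) ξ * (‖F₁ ξ‖ ^ 2 + ‖F₂ ξ‖ ^ 2) ≤ (curlPairing k q F₁ F₂ ξ).re +
      ‖ξ‖⁻¹ * (sobolevWeight (-(1 / 2)) ξ *
          (‖dotFt F₁ F₂ ξ‖ ^ 2 + ‖curlRemainder q F₁ F₂ ξ‖ ^ 2) +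
        2 * (sobolevWeight (-(1 / 2)) ξ * (‖F₁ ξ‖ ^ 2 + ‖F₂ ξ‖ ^ 2))) := by
  have one_le : 1 ≤ ‖ξ‖ := by linarith
  have pos : 0 < ‖ξ‖ := by linarith
  have curl_le := sobolevWeight_mul_norm_curlFt_sq_le hk q F₁ F₂ (by linarith : k < ‖ξ‖)
  have weight_pos := sobolevWeight_pos (-(1 / 2)) ξ
  set w := sobolevWeight (-(1 / 2)) ξ
  set d := ‖dotFt F₁ F₂ ξ‖
  set S := ‖curlRemainder q F₁ F₂ ξ‖
  have error_le : ‖g0hat k ξ‖ * S * ‖curlFt F₁ F₂ ξ‖ ≤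
      ‖ξ‖ * (w * (S ^ 2 + 2 * (‖F₁ ξ‖ ^ 2 + ‖F₂ ξ‖ ^ 2))) := by
    calc _ ≤ 2 * w * S * (‖ξ‖ * (‖F₁ ξ‖ + ‖F₂ ξ‖)) := by
          gcongr
          exacts [norm_g0hat_le hk hξ, norm_curlFt_le F₁ F₂ ξ]
      _ = ‖ξ‖ * (w * (2 * S * (‖F₁ ξ‖ + ‖F₂ ξ‖))) := by ring
      _ ≤ _ := by
          gcongr
          nlinarith [sq_nonneg (S - (‖F₁ ξ‖ + ‖F₂ ξ‖)), sq_nonneg (‖F₁ ξ‖ - ‖F₂ ξ‖)]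
  have div_le : w * d ^ 2 ≤ ‖ξ‖ * (w * d ^ 2) := le_mul_of_one_le_left (by positivity) one_le
  refine le_of_mul_le_mul_left ?_ (pow_pos pos 2)
  calc ‖ξ‖ ^ 2 * (w * (‖F₁ ξ‖ ^ 2 + ‖F₂ ξ‖ ^ 2)) =
        w * d ^ 2 + w * ‖curlFt F₁ F₂ ξ‖ ^ 2 := by
        linear_combination -w * norm_dotFt_sq_add_norm_curlFt_sq F₁ F₂ ξ
    _ ≤ ‖ξ‖ ^ 2 * (curlPairing k q F₁ F₂ ξ).re +
          ‖ξ‖ * (w * (d ^ 2 + S ^ 2) + 2 * (w * (‖F₁ ξ‖ ^ 2 + ‖F₂ ξ‖ ^ 2))) := by linarith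
    _ = _ := by field_simp

lemma IsSobolevFT.integral_mul_norm_sq_add {s : ℝ} (hF : IsSobolevFT s F₁)
    (hG : IsSobolevFT s F₂) :
    Integrable (fun ξ => sobolevWeight s ξ * (‖F₁ ξ‖ ^ 2 + ‖F₂ ξ‖ ^ 2)) ∧
      ∫ ξ, sobolevWeight s ξ * (‖F₁ ξ‖ ^ 2 + ‖F₂ ξ‖ ^ 2) =
        sobolevEnergy s F₁ + sobolevEnergy s F₂ := by
  simp only [mul_add]
  exact ⟨hF.integrable.add hG.integrable, integral_add hF.integrable hG.integrable⟩

lemma sobolevWeight_mul_norm_sq_le_re_curlPairing_add (hk : 0 ≤ k) (hR : 2 * k + 1 ≤ R)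
    (q F₁ F₂ : R2 → ℂ) (ξ : R2) :
    sobolevWeight (-(1 / 2)) ξ * (‖F₁ ξ‖ ^ 2 + ‖F₂ ξ‖ ^ 2) ≤ (curlPairing k q F₁ F₂ ξ).re +
      (R⁻¹ * (sobolevWeight (-(1 / 2)) ξ *
            (‖dotFt F₁ F₂ ξ‖ ^ 2 + ‖curlRemainder q F₁ F₂ ξ‖ ^ 2) +
          2 * (sobolevWeight (-(1 / 2)) ξ * (‖F₁ ξ‖ ^ 2 + ‖F₂ ξ‖ ^ 2))) +
        (Metric.closedBall 0 R).indicator (fun ξ => ‖curlPairing k q F₁ F₂ ξ‖ +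
          sobolevWeight (-(1 / 2)) ξ * (‖F₁ ξ‖ ^ 2 + ‖F₂ ξ‖ ^ 2)) ξ) := by
  have R_pos : 0 < R := by linarith
  have weight_pos := sobolevWeight_pos (-(1 / 2)) ξ
  by_cases hξ : ‖ξ‖ ≤ R
  · rw [Set.indicator_of_mem (mem_closedBall_zero_iff.2 hξ), ← add_assoc, ← add_assoc]
    refine le_add_of_nonneg_left ?_
    have re_add_nonneg : 0 ≤ (curlPairing k q F₁ F₂ ξ).re + ‖curlPairing k q F₁ F₂ ξ‖ :=
      neg_le_iff_add_nonneg.1 (neg_le_of_abs_le (abs_re_le_norm _))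
    rw [add_right_comm]
    exact add_nonneg re_add_nonneg (by positivity)
  · rw [Set.indicator_of_notMem (by rwa [mem_closedBall_zero_iff]), add_zero]
    rw [not_le] at hξ
    exact (sobolevWeight_mul_norm_sq_le_of_high_frequency hk q F₁ F₂ (hR.trans hξ.le)).trans
      (by gcongr)

lemma IsKernelField.energy_le (hF : IsKernelField k Γ F₁ F₂) (hk : 0 < k)
    (hq : MemHTilde (1 / 2) Γ q) (hS : IsSobolevFT (-(1 / 2)) (curlRemainder q F₁ F₂))
    (hR : 2 * k + 1 ≤ R) :
    sobolevEnergy (-(1 / 2)) F₁ + sobolevEnergy (-(1 / 2)) F₂ ≤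
      R⁻¹ * (sobolevEnergy (-(1 / 2)) (curlRemainder q F₁ F₂) +
        2 * fieldEnergy (-(1 / 2)) F₁ F₂) +
      ∫ ξ in Metric.closedBall (0 : R2) R, (‖curlPairing k q F₁ F₂ ξ‖ +
        sobolevWeight (-(1 / 2)) ξ * (‖F₁ ξ‖ ^ 2 + ‖F₂ ξ‖ ^ 2)) := by
  obtain ⟨field, field_eq⟩ := hF.fst.isSobolevFT.integral_mul_norm_sq_add hF.snd.isSobolevFT
  obtain ⟨error, error_eq⟩ := hF.dot.integral_mul_norm_sq_add hS
  have pairing :=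
    integrable_curlPairing hk hq.isSobolevFT hF.fst.isSobolevFT hF.snd.isSobolevFT
  have pairing_re_eq_zero : ∫ ξ, RCLike.re (curlPairing k q F₁ F₂ ξ) = 0 := by
    rw [integral_re pairing, hF.integral_eq_zero q hq, map_zero]
  have high := (error.add (field.const_mul 2)).const_mul R⁻¹
  have low := (pairing.norm.add field).indicator (measurableSet_closedBall (x := 0) (ε := R))
  have integrated := integral_mono field (pairing.re.add (high.add low))
    (sobolevWeight_mul_norm_sq_le_re_curlPairing_add hk.le hR q F₁ F₂)
  rw [integral_add' pairing.re (high.add low), integral_add' high low, integral_const_mul,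
    integral_add' error (field.const_mul 2), integral_const_mul,
    integral_indicator measurableSet_closedBall, field_eq, error_eq, pairing_re_eq_zero,
    zero_add] at integrated
  refine integrated.trans (add_le_add_left ?_ _)
  have R_pos : 0 < R := by linarith
  refine mul_le_mul_of_nonneg_left ?_ (inv_nonneg.2 R_pos.le)
  linarith [fieldEnergy.eq_1 (-(1 / 2)) F₁ F₂, sobolevEnergy_nonneg (-(1 / 2)) (dotFt F₁ F₂)]

lemma setIntegral_norm_curlPairing_add_le {δ B : ℝ} (hk : 0 < k) (hδ : δ ≤ 1)
    (hF₁ : ∀ ξ ∈ Metric.closedBall 0 R, ‖F₁ ξ‖ ≤ δ)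
    (hF₂ : ∀ ξ ∈ Metric.closedBall 0 R, ‖F₂ ξ‖ ≤ δ) (hq : ∀ ξ, ‖q ξ‖ ≤ B) :
    ∫ ξ in Metric.closedBall (0 : R2) R, (‖curlPairing k q F₁ F₂ ξ‖ +
        sobolevWeight (-(1 / 2)) ξ * (‖F₁ ξ‖ ^ 2 + ‖F₂ ξ‖ ^ 2)) ≤
      δ * ∫ ξ in Metric.closedBall (0 : R2) R, (2 * R * B * ‖g0hat k ξ‖ + 2) := by
  have integrable : IntegrableOn (fun ξ : R2 => 2 * R * B * ‖g0hat k ξ‖ + 2)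
      (Metric.closedBall 0 R) :=
    ((integrableOn_g0hat hk R).norm.const_mul _).add
      (integrableOn_const measure_closedBall_lt_top.ne)
  rw [← integral_const_mul]
  refine integral_mono_of_nonneg (.of_forall fun ξ => ?_) (integrable.const_mul δ)
    ((ae_restrict_iff' measurableSet_closedBall).2 (.of_forall fun ξ hξ => ?_))
  · have := sobolevWeight_pos (-(1 / 2)) ξ
    simp only [Pi.zero_apply]
    positivity
  have δ_nonneg : 0 ≤ δ := (norm_nonneg _).trans (hF₁ ξ hξ)
  have norm_le : ‖ξ‖ ≤ R := mem_closedBall_zero_iff.1 hξ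
  have R_nonneg : 0 ≤ R := (norm_nonneg ξ).trans norm_le
  have pairing_le : ‖curlPairing k q F₁ F₂ ξ‖ ≤ ‖g0hat k ξ‖ * B * (R * (δ + δ)) := by
    rw [curlPairing, norm_mul, norm_mul, norm_mul, norm_I, one_mul, RCLike.norm_conj]
    gcongr
    · exact mul_nonneg (norm_nonneg _) ((norm_nonneg _).trans (hq ξ))
    · exact hq ξ
    · refine (norm_curlFt_le F₁ F₂ ξ).trans ?_
      gcongr
      exacts [hF₁ ξ hξ, hF₂ ξ hξ]
  have field_le : sobolevWeight (-(1 / 2)) ξ * (‖F₁ ξ‖ ^ 2 + ‖F₂ ξ‖ ^ 2) ≤ 1 * (δ + δ) := by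
    have sq_le {z : ℂ} (hz : ‖z‖ ≤ δ) : ‖z‖ ^ 2 ≤ δ := by nlinarith [norm_nonneg z]
    gcongr
    exacts [sobolevWeight_le_one (by norm_num) ξ, sq_le (hF₁ ξ hξ), sq_le (hF₂ ξ hξ)]
  linarith

end KernelField

section Compactness

variable {Γ : Set R2} {k M : ℝ}

lemma HasLocalCones.exists_isRegularPotential_norm_le (hΓ : HasLocalCones Γ)
    (hb : Bornology.IsBounded Γ) {s : ℝ} (hs : -1 ≤ s) (M : ℝ) :
    ∃ N B, ∀ F₁ F₂, MemHTilde s Γ F₁ → MemHTilde s Γ F₂ → IsSobolevFT s (dotFt F₁ F₂) →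
      fieldEnergy s F₁ F₂ ≤ M → ∃ q, IsRegularPotential s Γ N q F₁ F₂ ∧ ∀ ξ, ‖q ξ‖ ≤ B := by
  obtain ⟨C, hC, potential⟩ := hΓ.exists_isRegularPotential hb s
  obtain ⟨C', hC', pointwise⟩ := exists_norm_sq_le_of_memHTilde (s + 1) hb
  refine ⟨C * M, √(C' * (C * M)), fun F₁ F₂ hF₁ hF₂ hdot hM => ?_⟩
  obtain ⟨q, hq⟩ := potential F₁ F₂ hF₁ hF₂ hdot
  replace hq := hq.mono (mul_le_mul_of_nonneg_left hM hC)
  refine ⟨q, hq, fun ξ => Real.le_sqrt_of_sq_le ?_⟩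
  calc ‖q ξ‖ ^ 2 ≤ C' * sobolevWeight (-(s + 1)) ξ * sobolevEnergy (s + 1) q :=
        pointwise q hq.memHTilde ξ
    _ ≤ C' * 1 * (C * M) := by
        gcongr
        · exact sobolevEnergy_nonneg _ _
        · exact sobolevWeight_le_one (by linarith) ξ
        · exact hq.energy_le
    _ = C' * (C * M) := by rw [mul_one]

theorem tendsto_energy_of_isKernelField (hΓ : HasLocalCones Γ) (hb : Bornology.IsBounded Γ)
    (hk : 0 < k) {ι : Type*} {l : Filter ι} {F₁ F₂ : ι → R2 → ℂ}
    (hF : ∀ i, IsKernelField k Γ (F₁ i) (F₂ i))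
    (hM : ∀ i, fieldEnergy (-(1 / 2)) (F₁ i) (F₂ i) ≤ M)
    (hF₁ : ∀ K, IsCompact K → TendstoUniformlyOn F₁ 0 l K)
    (hF₂ : ∀ K, IsCompact K → TendstoUniformlyOn F₂ 0 l K) :
    Tendsto (fun i => sobolevEnergy (-(1 / 2)) (F₁ i) + sobolevEnergy (-(1 / 2)) (F₂ i)) l
      (𝓝 0) := by
  have energy_nonneg (i : ι) :
      0 ≤ sobolevEnergy (-(1 / 2)) (F₁ i) + sobolevEnergy (-(1 / 2)) (F₂ i) :=
    add_nonneg (sobolevEnergy_nonneg _ _) (sobolevEnergy_nonneg _ _)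
  obtain ⟨N, B, potential⟩ :=
    hΓ.exists_isRegularPotential_norm_le hb (by norm_num : (-1 : ℝ) ≤ -(1 / 2)) M
  refine tendsto_order.2 ⟨fun a ha => .of_forall fun i => ha.trans_le (energy_nonneg i),
    fun ε hε => ?_⟩
  obtain ⟨R, high_lt, R_ge⟩ : ∃ R : ℝ, R⁻¹ * (N + 2 * M) < ε / 2 ∧ 2 * k + 1 ≤ R := by
    have high_tendsto : Tendsto (fun R : ℝ => R⁻¹ * (N + 2 * M)) atTop (𝓝 0) := by
      simpa only [zero_mul] using tendsto_inv_atTop_zero.mul_const (N + 2 * M)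
    exact ((high_tendsto.eventually_lt_const (half_pos hε)).and (eventually_ge_atTop _)).exists
  set A := ∫ ξ in Metric.closedBall (0 : R2) R, (2 * R * B * ‖g0hat k ξ‖ + 2)
  obtain ⟨δ, low_lt, δ_pos, δ_le⟩ : ∃ δ : ℝ, δ * A < ε / 2 ∧ δ ∈ Set.Ioc 0 1 := by
    have low_tendsto : Tendsto (fun δ : ℝ => δ * A) (𝓝[>] 0) (𝓝 0) :=
      ((continuous_mul_const A).tendsto' 0 0 (zero_mul A)).mono_left nhdsWithin_le_nhds
    exact ((low_tendsto.eventually_lt_const (half_pos hε)).and (Ioc_mem_nhdsGT one_pos)).exists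
  have eventually_le {F : ι → R2 → ℂ} (hF : ∀ K, IsCompact K → TendstoUniformlyOn F 0 l K) :
      ∀ᶠ i in l, ∀ ξ ∈ Metric.closedBall 0 R, ‖F i ξ‖ ≤ δ := by
    filter_upwards [Metric.tendstoUniformlyOn_iff.1 (hF _ (isCompact_closedBall 0 R)) δ δ_pos]
      with i hi ξ hξ
    simpa only [Pi.zero_apply, dist_zero_left] using (hi ξ hξ).le
  filter_upwards [eventually_le hF₁, eventually_le hF₂] with i hi₁ hi₂
  obtain ⟨q, hq, q_le⟩ := potential _ _ (hF i).fst (hF i).snd (hF i).dot (hM i)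
  have q_mem : MemHTilde (1 / 2) Γ q := by
    simpa only [show -(1 / 2) + 1 = (1 / 2 : ℝ) by norm_num] using hq.memHTilde
  have R_pos : 0 < R := by linarith
  calc _ ≤ _ := (hF i).energy_le hk q_mem hq.isSobolevFT_curlRemainder R_ge
    _ ≤ R⁻¹ * (N + 2 * M) + δ * A := by
        gcongr
        exacts [hq.energy_curlRemainder_le, hM i,
          setIntegral_norm_curlPairing_add_le hk δ_le hi₁ hi₂ q_le]
    _ < ε := by linarith

lemma IsSobolevFT.tendsto_energy_sub_of_cauchy {s : ℝ} {u : ℕ → R2 → ℂ} {L : R2 → ℂ}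
    (hu : ∀ n, IsSobolevFT s (u n)) (hL : Continuous L)
    (hlim : ∀ ξ, Tendsto (fun n => u n ξ) atTop (𝓝 (L ξ)))
    (hcauchy : Tendsto (fun p : ℕ × ℕ => sobolevEnergy s (fun ξ => u p.1 ξ - u p.2 ξ))
      (atTop ×ˢ atTop) (𝓝 0)) :
    Tendsto (fun n => sobolevEnergy s (fun ξ => u n ξ - L ξ)) atTop (𝓝 0) := by
  refine tendsto_order.2
    ⟨fun a ha => .of_forall fun n => ha.trans_le (sobolevEnergy_nonneg _ _), fun ε hε => ?_⟩
  filter_upwards [(hcauchy.eventually_lt_const (half_pos hε)).curry] with n hn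
  have limit_le := (IsSobolevFT.of_tendsto (fun m => ((hu n).sub_and_energy_le (hu m)).1)
    ((hu n).continuous.sub hL) (fun ξ => (hlim ξ).const_sub (u n ξ)) (hn.mono fun m => le_of_lt)).2
  exact limit_le.trans_lt (half_lt_self hε)

lemma tendstoUniformlyOn_sub_fst_snd {α : Type*} {u : ℕ → α → ℂ} {L : α → ℂ} {K : Set α}
    (hu : TendstoUniformlyOn u L atTop K) :
    TendstoUniformlyOn (fun (p : ℕ × ℕ) ξ => u p.1 ξ - u p.2 ξ) 0 (atTop ×ˢ atTop) K := by
  refine Metric.tendstoUniformlyOn_iff.2 fun ε hε => ?_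
  filter_upwards [hu.uniformCauchySeqOn _ (Metric.dist_mem_uniformity hε)] with p hp ξ hξ
  rw [Pi.zero_apply, dist_zero_left, ← dist_eq_norm]
  exact hp ξ hξ

theorem tendsto_energy_sub_of_isKernelField (hΓ : HasLocalCones Γ) (hb : Bornology.IsBounded Γ)
    (hk : 0 < k) {F₁ F₂ : ℕ → R2 → ℂ} {L₁ L₂ : R2 → ℂ}
    (hF : ∀ n, IsKernelField k Γ (F₁ n) (F₂ n))
    (hM : ∀ n, fieldEnergy (-(1 / 2)) (F₁ n) (F₂ n) ≤ M)
    (hF₁ : ∀ K, IsCompact K → TendstoUniformlyOn F₁ L₁ atTop K)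
    (hF₂ : ∀ K, IsCompact K → TendstoUniformlyOn F₂ L₂ atTop K)
    (hL₁ : Continuous L₁) (hL₂ : Continuous L₂) :
    Tendsto (fun n => sobolevEnergy (-(1 / 2)) (fun ξ => F₁ n ξ - L₁ ξ) +
      sobolevEnergy (-(1 / 2)) (fun ξ => F₂ n ξ - L₂ ξ)) atTop (𝓝 0) := by
  have differences := tendsto_energy_of_isKernelField (l := atTop ×ˢ atTop) hΓ hb hk
    (fun p : ℕ × ℕ => (hF p.1).sub hk (hF p.2))
    (fun p => ((hF p.1).isDivFieldFT.sub_and_energy_le (hF p.2).isDivFieldFT).2.trans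
      (mul_le_mul_of_nonneg_left (add_le_add (hM p.1) (hM p.2)) zero_le_two))
    (fun K hK => tendstoUniformlyOn_sub_fst_snd (hF₁ K hK))
    (fun K hK => tendstoUniformlyOn_sub_fst_snd (hF₂ K hK))
  have pointwise {F : ℕ → R2 → ℂ} {L : R2 → ℂ}
      (h : ∀ K, IsCompact K → TendstoUniformlyOn F L atTop K) (ξ : R2) :
      Tendsto (fun n => F n ξ) atTop (𝓝 (L ξ)) :=
    (h {ξ} isCompact_singleton).tendsto_at rfl
  have fst := IsSobolevFT.tendsto_energy_sub_of_cauchy (fun n => (hF n).fst.isSobolevFT) hL₁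
    (pointwise hF₁) (squeeze_zero (fun _ => sobolevEnergy_nonneg _ _)
      (fun _ => le_add_of_nonneg_right (sobolevEnergy_nonneg _ _)) differences)
  have snd := IsSobolevFT.tendsto_energy_sub_of_cauchy (fun n => (hF n).snd.isSobolevFT) hL₂
    (pointwise hF₂) (squeeze_zero (fun _ => sobolevEnergy_nonneg _ _)
      (fun _ => le_add_of_nonneg_left (sobolevEnergy_nonneg _ _)) differences)
  simpa only [add_zero] using fst.add snd

lemma wnormSq_eq_mul_sobolevEnergy (s : ℝ) (F : R2 → ℂ) :
    wnormSq s F = ((2 * π) ^ 2)⁻¹ * sobolevEnergy s F := rfl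

lemma fieldEnergy_eq_mul_XnormSq (V : Xelt Γ) :
    fieldEnergy (-(1 / 2)) V.c1.ft V.c2.ft = (2 * π) ^ 2 * XnormSq V := by
  have energy_divFt : sobolevEnergy (-(1 / 2)) (divFt V) =
      sobolevEnergy (-(1 / 2)) (dotFt V.c1.ft V.c2.ft) := by
    refine (sobolevEnergy_const_mul _ I _).trans ?_
    rw [norm_I, one_pow, one_mul]
  simp only [XnormSq, HnormSq, wnormSq_eq_mul_sobolevEnergy]
  rw [energy_divFt, ← mul_add, ← mul_add, mul_inv_cancel_left₀ (by positivity), fieldEnergy]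

theorem statement7_general (Γ : Set R2) (hb : Bornology.IsBounded Γ) (hΓ : HasLocalCones Γ)
    (k : ℝ) (hk : 0 < k) (V : ℕ → Xelt Γ)
    (hE : ∀ n, ∀ q : HTildeElt (1/2 : ℝ) Γ, Eform k q (V n) = 0)
    (M : ℝ) (hbdd : ∀ n, XnormSq (V n) ≤ M) :
    ∃ φ : ℕ → ℕ, StrictMono φ ∧ ∃ L1 L2 : HTildeElt (-(1/2) : ℝ) Γ,
      Tendsto (fun n =>
          wnormSq (-(1/2)) (fun ξ => (V (φ n)).c1.ft ξ - L1.ft ξ) +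
          wnormSq (-(1/2)) (fun ξ => (V (φ n)).c2.ft ξ - L2.ft ξ))
        atTop (𝓝 0) := by
  have field_le (n : ℕ) : fieldEnergy (-(1 / 2)) (V n).c1.ft (V n).c2.ft ≤ (2 * π) ^ 2 * M :=
    (fieldEnergy_eq_mul_XnormSq (V n)).trans_le
      (mul_le_mul_of_nonneg_left (hbdd n) (by positivity))
  have energy_le (n : ℕ) := (sobolevEnergy_add_le_fieldEnergy _ _ _).trans (field_le n)
  obtain ⟨φ₁, hφ₁, L₁, hL₁, lim₁⟩ := exists_subseq_tendstoUniformlyOn_of_memHTilde hb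
    (fun n => (V n).c1.memHTilde)
    fun n => (le_add_of_nonneg_right (sobolevEnergy_nonneg _ _)).trans (energy_le n)
  obtain ⟨φ₂, hφ₂, L₂, hL₂, lim₂⟩ := exists_subseq_tendstoUniformlyOn_of_memHTilde hb
    (fun n => (V (φ₁ n)).c2.memHTilde)
    fun n => (le_add_of_nonneg_left (sobolevEnergy_nonneg _ _)).trans (energy_le (φ₁ n))
  refine ⟨φ₁ ∘ φ₂, hφ₁.comp hφ₂, hL₁.toHTildeElt, hL₂.toHTildeElt, ?_⟩
  have converges := tendsto_energy_sub_of_isKernelField hΓ hb hk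
    (fun n => isKernelField_of_Eform_eq_zero hk.ne' (V (φ₁ (φ₂ n))) (hE _)) (fun n => field_le _)
    (fun K hK u hu => hφ₂.tendsto_atTop.eventually (lim₁ K hK u hu)) lim₂
    hL₁.isSobolevFT.continuous hL₂.isSobolevFT.continuous
  simp only [wnormSq_eq_mul_sobolevEnergy, ← mul_add]
  exact mul_zero ((2 * π) ^ 2)⁻¹ ▸ converges.const_mul ((2 * π) ^ 2)⁻¹

end Compactness

/-- Lemma 3.4: the kernel `X₀ = {V ∈ X : E(q,V) = 0 ∀ q ∈ H̃^{1/2}(Γ)}`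
is compactly embedded in `H`: every sequence in `X₀` bounded in the `X`-norm has a
subsequence converging in the norm of `H`. -/
theorem statement7 (Γ : Set R2) (hΓ : IsLipschitzDomain Γ) (k : ℝ) (hk : 0 < k)
    (V : ℕ → Xelt Γ)
    (hE : ∀ n, ∀ q : HTildeElt (1/2 : ℝ) Γ, Eform k q (V n) = 0)
    (M : ℝ) (hbdd : ∀ n, XnormSq (V n) ≤ M) :
    ∃ φ : ℕ → ℕ, StrictMono φ ∧ ∃ L1 L2 : HTildeElt (-(1/2) : ℝ) Γ,
      Tendsto (fun n =>
          wnormSq (-(1/2)) (fun ξ => (V (φ n)).c1.ft ξ - L1.ft ξ) +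
          wnormSq (-(1/2)) (fun ξ => (V (φ n)).c2.ft ξ - L2.ft ξ))
        atTop (𝓝 0) :=
  statement7_general Γ hΓ.2.1 hΓ.hasLocalCones k hk V hE M hbdd

end
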